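/- Let n ≥ 1 and let K be a smooth, strictly convex body in ℝ^{n+1} with positive support function h. Set M := max_{S^n} h·det(A+x⊗x), m := min_{S^n} h·det(A+x⊗x), ε := M/m − 1, c(K) := (∫ ∇h_K dV)/(∫ dV), and h̃(x) := h(x) − ⟨x, c(K)⟩. Then (n+1+ε)·∫_{S^n} (|∇h_K(x) − c(K)|² − h̃(x)²) dθ ≤ n·ε·∫_{S^n} h̃(x)² dθ. -/

import Mathlib

/-! The heart of the matter is a local Brunn–Minkowski inequality: for every vector `e`,
`n ∫ ⟪∇h - c, e⟫² dV ≤ ∫ h ⟪A e, e⟫ dV`, where `c = c(K)`. Extend the inverse Gauss map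
`u ↦ ∇h(u)` of `K` to the 1-homogeneous map `Φ(x) = ‖x‖ ∇h(x)`. Its Jacobian determinant at
`u ∈ S^n` is the density of `dV`, so `Φ` maps the star body with radial function `ρ` to a set of
volume `∫ ρ^(n+1) dV / (n+1)`. Let `f = ⟪∇h - c, e⟫` and take `ρ = 1 ± d f + d² g` with `g`
slightly below `f²`. Translating supporting hyperplanes by small multiples of `e` shows that for
small `d` all midpoints between the two images lie in the image for `ρ = 1 + d² k`, as soon as
`k > f² + h ⟪A e, e⟫ / 2`. Now compare the coefficients of `d²` in the Brunn–Minkowski inequality;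
the linear terms vanish because `c` is the centroid of `dV`.

Summation over an orthonormal basis gives `n ∫ |∇h - c|² dV ≤ ∫ h tr A dV`. Pinching the density of
`dV` between `m` and `M` turns this into an inequality for `dθ`, from which the identity
`∫ |∇h - c|² dθ + ∫ h tr A dθ = (n + 1) ∫ h̃² dθ`, a case of the divergence theorem, eliminates
`tr A`. -/

open MeasureTheory Metric Real
open scoped InnerProductSpace ENNReal Topology

noncomputable section

/-- Euclidean space `ℝ^{n+1}`. -/
abbrev Eu (n : ℕ) : Type := EuclideanSpace ℝ (Fin (n + 1))

/-- The unit sphere `S^n ⊆ ℝ^{n+1}` as a subtype. -/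
abbrev Sph (n : ℕ) : Type := Metric.sphere (0 : Eu n) 1

/-- The spherical Lebesgue (surface) measure on `S^n`. -/
def sphMeas (n : ℕ) : Measure (Sph n) := (volume : Measure (Eu n)).toSphere

/-- The support function of a set `K ⊆ ℝ^{n+1}`. -/
def sfn {n : ℕ} (K : Set (Eu n)) (z : Eu n) : ℝ :=
  sSup ((fun y => ⟪z, y⟫_ℝ) '' K)

/-- The Hessian endomorphism `A(x) = D(∇ h_K)(x)`. -/
def hessA {n : ℕ} (K : Set (Eu n)) (x : Eu n) : Eu n →L[ℝ] Eu n :=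
  fderiv ℝ (gradient (sfn K)) x

/-- The rank-one endomorphism `x ⊗ x : v ↦ ⟨v, x⟩ x`. -/
def tens {n : ℕ} (x : Eu n) : Eu n →L[ℝ] Eu n :=
  (innerSL ℝ x).smulRight x

/-- `det (A(x) + x ⊗ x)`, the reciprocal Gauss curvature `1/𝒦` at `x ∈ S^n`. -/
def rK {n : ℕ} (K : Set (Eu n)) (x : Eu n) : ℝ :=
  LinearMap.det ((hessA K x + tens x : Eu n →L[ℝ] Eu n) : Eu n →ₗ[ℝ] Eu n)

/-- `K` is a smooth, strictly convex body with positive support function. -/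
structure IsSmoothConvexBody {n : ℕ} (K : Set (Eu n)) : Prop where
  compact : IsCompact K
  convex : Convex ℝ K
  interior_nonempty : (interior K).Nonempty
  pos : ∀ x : Sph n, 0 < sfn K x
  smooth : ContDiffOn ℝ (⊤ : ℕ∞) (sfn K) {(0 : Eu n)}ᶜ
  posdef : ∀ x : Sph n, ∀ v : Eu n, v ≠ 0 →
    0 < ⟪(hessA K (x : Eu n) + tens (x : Eu n)) v, v⟫_ℝ

/-- The density `h·det(A + x⊗x)` of the measure `dV` with respect to `dθ`. -/
def dens {n : ℕ} (K : Set (Eu n)) (x : Eu n) : ℝ := sfn K x * rK K x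

/-- The centroid-type point `c(K) = (∫ ∇h_K dV)/(∫ dV)`. -/
def cK {n : ℕ} (K : Set (Eu n)) : Eu n :=
  (∫ x : Sph n, dens K x ∂sphMeas n)⁻¹ •
    ∫ x : Sph n, dens K x • gradient (sfn K) x ∂sphMeas n

/-- The support function of the translated body `K - c(K)`. -/
def tsfn {n : ℕ} (K : Set (Eu n)) (x : Eu n) : ℝ := sfn K x - ⟪x, cK K⟫_ℝ

/-! ### The Prékopa–Leindler inequality -/

section PrekopaLeindler

/-- The midpoint case of the Prékopa–Leindler inequality holds for the measure `μ`. -/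
def PrekopaLeindler {E : Type*} [AddCommGroup E] [Module ℝ E] [MeasurableSpace E]
    (μ : Measure E) : Prop :=
  ∀ ⦃f g h : E → ℝ≥0∞⦄, Measurable f → Measurable g → Measurable h →
    (∀ x y, f x * g y ≤ h (midpoint ℝ x y) ^ 2) →
      (∫⁻ x, f x ∂μ) * (∫⁻ x, g x ∂μ) ≤ (∫⁻ x, h x ∂μ) ^ 2

lemma volume_add_volume_le_of_isCompact {A B C : Set ℝ} (hA : IsCompact A) (hB : IsCompact B)
    (hA₀ : A.Nonempty) (hB₀ : B.Nonempty) (hC : ∀ a ∈ A, ∀ b ∈ B, midpoint ℝ a b ∈ C) :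
    volume A + volume B ≤ 2 * volume C := by
  obtain ⟨a, ha, ha_max⟩ := hA.exists_isGreatest hA₀
  obtain ⟨b, hb, hb_min⟩ := hB.exists_isLeast hB₀
  -- `A + min B` and `max A + B` meet in at most one point, and both lie in `2 • C`.
  have subset : (b + ·) '' A ∪ (a + ·) '' B ⊆ (fun x ↦ (2 : ℝ) • x) '' C := by
    rintro _ (⟨a', ha', rfl⟩ | ⟨b', hb', rfl⟩)
    · exact ⟨_, hC a' ha' b hb, by simp [midpoint_eq_smul_add, add_comm]⟩
    · exact ⟨_, hC a ha b' hb', by simp [midpoint_eq_smul_add]⟩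
  have disjoint : AEDisjoint volume ((b + ·) '' A) ((a + ·) '' B) := by
    refine measure_mono_null (t := {a + b}) ?_ (by simp)
    rintro _ ⟨⟨a', ha', rfl⟩, b', hb', h⟩
    have := ha_max ha'
    have := hb_min hb'
    simp only [Set.mem_singleton_iff] at *
    linarith
  have measurable : MeasurableSet ((a + ·) '' B) :=
    (hB.image (by fun_prop)).isClosed.measurableSet
  calc volume A + volume B = volume ((b + ·) '' A ∪ (a + ·) '' B) := by
        rw [measure_union₀ measurable.nullMeasurableSet disjoint]; simp
    _ ≤ volume ((fun x ↦ (2 : ℝ) • x) '' C) := measure_mono subset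
    _ = 2 * volume C := by rw [Set.image_smul, Measure.addHaar_smul]; simp

lemma volume_add_volume_le {A B C : Set ℝ} (hA : MeasurableSet A) (hB : MeasurableSet B)
    (hA₀ : A.Nonempty) (hB₀ : B.Nonempty) (hC : ∀ a ∈ A, ∀ b ∈ B, midpoint ℝ a b ∈ C) :
    volume A + volume B ≤ 2 * volume C := by
  obtain ⟨a, ha⟩ := hA₀
  obtain ⟨b, hb⟩ := hB₀
  simp only [hA.measure_eq_iSup_isCompact, hB.measure_eq_iSup_isCompact, iSup_and']
  refine ENNReal.biSup_add_biSup_le' ⟨∅, by simp⟩ ⟨∅, by simp⟩ fun K hK L hL ↦ ?_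
  have subset_A : insert a K ⊆ A := Set.insert_subset ha hK.1
  have subset_B : insert b L ⊆ B := Set.insert_subset hb hL.1
  calc volume K + volume L ≤ volume (insert a K) + volume (insert b L) := by
        gcongr <;> exact Set.subset_insert _ _
    _ ≤ 2 * volume C :=
      volume_add_volume_le_of_isCompact (hK.2.insert a) (hL.2.insert b)
        (Set.insert_nonempty _ _) (Set.insert_nonempty _ _)
        fun x hx y hy ↦ hC x (subset_A hx) y (subset_B hy)

lemma lintegral_eq_lintegral_Ioo_meas_lt {α : Type*} [MeasurableSpace α] (μ : Measure α)
    {f : α → ℝ≥0∞} (hf : Measurable f) (hf₁ : ∀ x, f x ≤ 1) :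
    ∫⁻ x, f x ∂μ = ∫⁻ t in Set.Ioo (0 : ℝ) 1, μ {x | ENNReal.ofReal t < f x} := by
  have hf_top (x : α) : f x ≠ ∞ := ne_top_of_le_ne_top ENNReal.one_ne_top (hf₁ x)
  have layer_cake := lintegral_eq_lintegral_meas_lt μ (f := fun x ↦ (f x).toReal)
    (.of_forall fun _ ↦ ENNReal.toReal_nonneg) hf.ennreal_toReal.aemeasurable
  simp only [ENNReal.ofReal_toReal (hf_top _)] at layer_cake
  rw [layer_cake, ← Set.Ioo_union_Ici_eq_Ioi zero_lt_one,
    lintegral_union measurableSet_Ici (Set.disjoint_left.2 fun t ht ht' ↦ ht.2.not_ge ht')]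
  have vanish : ∫⁻ t in Set.Ici (1 : ℝ), μ {x | t < (f x).toReal} = 0 := by
    refine setLIntegral_eq_zero measurableSet_Ici fun t (ht : 1 ≤ t) ↦ ?_
    have : {x | t < (f x).toReal} = ∅ := Set.eq_empty_of_forall_notMem fun x hx ↦
      (ht.trans_lt hx).not_ge (ENNReal.toReal_mono ENNReal.one_ne_top (hf₁ x))
    simp [this]
  rw [vanish, add_zero]
  refine setLIntegral_congr_fun measurableSet_Ioo fun t ht ↦ ?_
  simp only [ENNReal.ofReal_lt_iff_lt_toReal ht.1.le (hf_top _)]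

lemma lintegral_add_lintegral_le_of_iSup_eq_one {f g h : ℝ → ℝ≥0∞}
    (hf : Measurable f) (hg : Measurable g) (hh : Measurable h)
    (hf₁ : ⨆ x, f x = 1) (hg₁ : ⨆ x, g x = 1)
    (hfgh : ∀ x y, f x * g y ≤ h (midpoint ℝ x y) ^ 2) :
    (∫⁻ x, f x) + (∫⁻ x, g x) ≤ 2 * ∫⁻ x, h x := by
  have measurable_level (u : ℝ → ℝ≥0∞) :
      Measurable fun t : ℝ ↦ volume {x | ENNReal.ofReal t < u x} :=
    Antitone.measurable fun s t hst ↦ measure_mono fun x hx ↦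
      (ENNReal.ofReal_le_ofReal hst).trans_lt hx
  calc (∫⁻ x, f x) + (∫⁻ x, g x)
    _ = ∫⁻ t in Set.Ioo (0 : ℝ) 1, (volume {x | ENNReal.ofReal t < f x} +
          volume {x | ENNReal.ofReal t < g x}) := by
      rw [lintegral_add_left (measurable_level f),
        lintegral_eq_lintegral_Ioo_meas_lt _ hf fun x ↦ hf₁ ▸ le_iSup f x,
        lintegral_eq_lintegral_Ioo_meas_lt _ hg fun x ↦ hg₁ ▸ le_iSup g x]
    _ ≤ ∫⁻ t in Set.Ioo (0 : ℝ) 1, 2 * volume {x | ENNReal.ofReal t < min (h x) 1} := by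
      refine setLIntegral_mono' measurableSet_Ioo fun t ht ↦ ?_
      have ht₁ : ENNReal.ofReal t < 1 := by simpa using ht.2
      refine volume_add_volume_le (measurableSet_lt measurable_const hf)
        (measurableSet_lt measurable_const hg) (lt_iSup_iff.1 (ht₁.trans_eq hf₁.symm))
        (lt_iSup_iff.1 (ht₁.trans_eq hg₁.symm)) fun a ha b hb ↦ lt_min ?_ ht₁
      refine lt_of_pow_lt_pow_left' 2 ((?_ : _ < f a * g b).trans_le (hfgh a b))
      rw [sq]
      exact ENNReal.mul_lt_mul ha hb
    _ = 2 * ∫⁻ x, min (h x) 1 := by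
      rw [lintegral_const_mul _ (measurable_level _), lintegral_eq_lintegral_Ioo_meas_lt _
        (hh.min measurable_const) fun x ↦ min_le_right _ _]
    _ ≤ 2 * ∫⁻ x, h x := by gcongr; exact min_le_left _ _

lemma mul_le_sq_of_add_le_two_mul {a b c : ℝ≥0∞} (h : a + b ≤ 2 * c) :
    a * b ≤ c ^ 2 := by
  obtain rfl | hc := eq_or_ne c ∞
  · simp
  have two_mul_ne_top : 2 * c ≠ ∞ := ENNReal.mul_ne_top (by simp) hc
  lift a to NNReal using ne_top_of_le_ne_top two_mul_ne_top (le_self_add.trans h)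
  lift b to NNReal using ne_top_of_le_ne_top two_mul_ne_top (le_add_self.trans h)
  lift c to NNReal using hc
  norm_cast at h ⊢
  refine le_of_mul_le_mul_left ?_ (zero_lt_four (α := NNReal))
  calc 4 * (a * b) = 4 * a * b := (mul_assoc _ _ _).symm
    _ ≤ (a + b) ^ 2 := four_mul_le_sq_add a b
    _ ≤ (2 * c) ^ 2 := by gcongr
    _ = 4 * c ^ 2 := by ring

lemma lintegral_mul_lintegral_le_of_iSup_ne_top {f g h : ℝ → ℝ≥0∞}
    (hf : Measurable f) (hg : Measurable g) (hh : Measurable h)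
    (hf_top : ⨆ x, f x ≠ ∞) (hg_top : ⨆ x, g x ≠ ∞)
    (hfgh : ∀ x y, f x * g y ≤ h (midpoint ℝ x y) ^ 2) :
    (∫⁻ x, f x) * (∫⁻ x, g x) ≤ (∫⁻ x, h x) ^ 2 := by
  set F := ⨆ x, f x with hF
  set G := ⨆ x, g x with hG
  obtain hF₀ | hF₀ := eq_or_ne F 0
  · simp [ENNReal.iSup_eq_zero.1 hF₀]
  obtain hG₀ | hG₀ := eq_or_ne G 0
  · simp [ENNReal.iSup_eq_zero.1 hG₀]
  obtain ⟨s, hs⟩ : ∃ s : ℝ≥0∞, s ^ 2 = F * G :=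
    ⟨(F * G) ^ (1 / 2 : ℝ), by rw [← ENNReal.rpow_natCast, ← ENNReal.rpow_mul]; simp⟩
  have hs₀ : s ≠ 0 := by rintro rfl; exact mul_ne_zero hF₀ hG₀ (by simp [← hs])
  have hs_top : s ≠ ∞ := by rintro rfl; exact ENNReal.mul_ne_top hf_top hg_top (by simp [← hs])
  have normalized : (F⁻¹ * ∫⁻ x, f x) * (G⁻¹ * ∫⁻ x, g x) ≤ (s⁻¹ * ∫⁻ x, h x) ^ 2 := by
    simp only [← lintegral_const_mul _ hf, ← lintegral_const_mul _ hg, ← lintegral_const_mul _ hh]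
    refine mul_le_sq_of_add_le_two_mul <| lintegral_add_lintegral_le_of_iSup_eq_one
      (hf.const_mul _) (hg.const_mul _) (hh.const_mul _)
      (by rw [← ENNReal.mul_iSup, ← hF, ENNReal.inv_mul_cancel hF₀ hf_top])
      (by rw [← ENNReal.mul_iSup, ← hG, ENNReal.inv_mul_cancel hG₀ hg_top]) fun x y ↦ ?_
    calc F⁻¹ * f x * (G⁻¹ * g y) = (F * G)⁻¹ * (f x * g y) := by
          rw [ENNReal.mul_inv (.inl hF₀) (.inl hf_top)]; ring
      _ ≤ (F * G)⁻¹ * h (midpoint ℝ x y) ^ 2 := by gcongr; exact hfgh x y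
      _ = (s⁻¹ * h (midpoint ℝ x y)) ^ 2 := by rw [← hs, mul_pow, ENNReal.inv_pow]
  calc (∫⁻ x, f x) * (∫⁻ x, g x)
    _ = F * G * ((F⁻¹ * ∫⁻ x, f x) * (G⁻¹ * ∫⁻ x, g x)) := by
      rw [mul_mul_mul_comm F, ENNReal.mul_inv_cancel_left hF₀ hf_top,
        ENNReal.mul_inv_cancel_left hG₀ hg_top]
    _ ≤ s ^ 2 * (s⁻¹ * ∫⁻ x, h x) ^ 2 := by rw [hs]; gcongr
    _ = (∫⁻ x, h x) ^ 2 := by rw [← mul_pow, ENNReal.mul_inv_cancel_left hs₀ hs_top]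

lemma lintegral_eq_iSup_lintegral_min_natCast {α : Type*} [MeasurableSpace α] (μ : Measure α)
    {f : α → ℝ≥0∞} (hf : Measurable f) :
    ∫⁻ x, f x ∂μ = ⨆ k : ℕ, ∫⁻ x, min (f x) k ∂μ := by
  rw [← lintegral_iSup (fun k ↦ hf.min measurable_const)
    fun i j hij x ↦ min_le_min_left _ (by exact_mod_cast hij)]
  simp only [← inf_iSup_eq, ENNReal.iSup_natCast, inf_top_eq]

lemma prekopaLeindler_real : PrekopaLeindler (volume : Measure ℝ) := by
  intro f g h hf hg hh hfgh
  have iSup_min_ne_top (u : ℝ → ℝ≥0∞) (k : ℕ) : ⨆ x, min (u x) (k : ℝ≥0∞) ≠ ∞ :=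
    ne_top_of_le_ne_top (by simp) (iSup_le fun x ↦ min_le_right _ (k : ℝ≥0∞))
  rw [lintegral_eq_iSup_lintegral_min_natCast _ hf, lintegral_eq_iSup_lintegral_min_natCast _ hg]
  simp only [ENNReal.iSup_mul, ENNReal.mul_iSup, iSup_le_iff]
  intro j i
  refine lintegral_mul_lintegral_le_of_iSup_ne_top (hf.min measurable_const)
    (hg.min measurable_const) hh (iSup_min_ne_top f i) (iSup_min_ne_top g j) fun x y ↦ ?_
  exact (mul_le_mul' (min_le_left _ _) (min_le_left _ _)).trans (hfgh x y)

namespace PrekopaLeindler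

variable {E F : Type*} [AddCommGroup E] [Module ℝ E] [MeasurableSpace E]
  [AddCommGroup F] [Module ℝ F] [MeasurableSpace F] {μ : Measure E} {ν : Measure F}

lemma prod [SFinite ν] (hμ : PrekopaLeindler μ) (hν : PrekopaLeindler ν) :
    PrekopaLeindler (μ.prod ν) := by
  intro f g h hf hg hh hfgh
  simp only [lintegral_prod _ hf.aemeasurable, lintegral_prod _ hg.aemeasurable,
    lintegral_prod _ hh.aemeasurable]
  refine hμ hf.lintegral_prod_right' hg.lintegral_prod_right' hh.lintegral_prod_right' ?_
  exact fun x₁ y₁ ↦ hν (hf.comp measurable_prodMk_left) (hg.comp measurable_prodMk_left)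
    (hh.comp measurable_prodMk_left) fun x₂ y₂ ↦ by
      simpa [midpoint_eq_smul_add] using hfgh (x₁, x₂) (y₁, y₂)

lemma of_measurePreserving (hμ : PrekopaLeindler μ) (L : E →ₗ[ℝ] F)
    (hL : MeasurePreserving L μ ν) : PrekopaLeindler ν := by
  intro f g h hf hg hh hfgh
  rw [← hL.lintegral_comp hf, ← hL.lintegral_comp hg, ← hL.lintegral_comp hh]
  refine hμ (hf.comp hL.measurable) (hg.comp hL.measurable) (hh.comp hL.measurable) fun x y ↦ ?_
  simpa [midpoint_eq_smul_add] using hfgh (L x) (L y)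

lemma measure_mul_measure_le (hμ : PrekopaLeindler μ) {A B C : Set E} (hA : MeasurableSet A)
    (hB : MeasurableSet B) (hC : MeasurableSet C) (hABC : ∀ a ∈ A, ∀ b ∈ B, midpoint ℝ a b ∈ C) :
    μ A * μ B ≤ μ C ^ 2 := by
  simp only [← lintegral_indicator_one hA, ← lintegral_indicator_one hB,
    ← lintegral_indicator_one hC]
  refine hμ (measurable_one.indicator hA) (measurable_one.indicator hB)
    (measurable_one.indicator hC) fun x y ↦ ?_
  by_cases hx : x ∈ A
  · by_cases hy : y ∈ B
    · simp [hx, hy, hABC x hx y hy]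
    · simp [hy]
  · simp [hx]

end PrekopaLeindler

lemma prekopaLeindler_pi : ∀ N : ℕ, PrekopaLeindler (volume : Measure (Fin N → ℝ))
  | 0 => fun f g h _ _ _ hfgh ↦ by
    have lintegral_eq (u : (Fin 0 → ℝ) → ℝ≥0∞) : ∫⁻ x, u x = u 0 := by
      rw [volume_pi, Measure.pi_of_empty _ 0, lintegral_dirac]
    simpa [lintegral_eq] using hfgh 0 0
  | N + 1 => by
    have cons_eq : ⇑(Fin.consLinearEquiv ℝ fun _ : Fin (N + 1) ↦ ℝ) =
        (MeasurableEquiv.piFinSuccAbove (fun _ ↦ ℝ) 0).symm := by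
      ext p : 1
      simp [MeasurableEquiv.piFinSuccAbove, Fin.insertNthEquiv, Fin.consLinearEquiv, Fin.consEquiv]
    refine (prekopaLeindler_real.prod (prekopaLeindler_pi N)).of_measurePreserving
      (Fin.consLinearEquiv ℝ fun _ : Fin (N + 1) ↦ ℝ).toLinearMap ?_
    rw [LinearEquiv.coe_coe, cons_eq]
    exact (volume_preserving_piFinSuccAbove (fun _ : Fin (N + 1) ↦ ℝ) 0).symm

lemma prekopaLeindler_volume (E : Type*) [NormedAddCommGroup E] [InnerProductSpace ℝ E]
    [FiniteDimensional ℝ E] [MeasurableSpace E] [BorelSpace E] :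
    PrekopaLeindler (volume : Measure E) :=
  ((prekopaLeindler_pi _).of_measurePreserving (WithLp.linearEquiv 2 ℝ _).symm.toLinearMap
    (PiLp.volume_preserving_toLp _)).of_measurePreserving
    (stdOrthonormalBasis ℝ E).repr.symm.toLinearEquiv.toLinearMap
    (stdOrthonormalBasis ℝ E).measurePreserving_repr_symm

end PrekopaLeindler

/-! ### Homogeneous maps and integration on the unit sphere -/

/-- `X` is positively homogeneous of degree `k`. -/
def PosHomogeneous {E F : Type*} [SMul ℝ E] [SMul ℝ F] (k : ℕ) (X : E → F) : Prop :=
  ∀ ⦃t : ℝ⦄, 0 < t → ∀ x, X (t • x) = t ^ k • X x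

namespace PosHomogeneous

variable {E F G : Type*} [NormedAddCommGroup E] [NormedSpace ℝ E] [NormedAddCommGroup F]
  [NormedSpace ℝ F] [NormedAddCommGroup G] [NormedSpace ℝ G] {k : ℕ}

protected lemma fderiv {X : E → F} (hX : PosHomogeneous (k + 1) X) :
    PosHomogeneous k (fderiv ℝ X) := by
  intro t ht x
  have h : fderiv ℝ (X <| t • ·) x = t ^ (k + 1) • fderiv ℝ X x := by
    rw [show (X <| t • ·) = t ^ (k + 1) • X from funext (hX ht), fderiv_const_smul_field,
      Pi.smul_apply]
  rw [fderiv_comp_smul, pow_succ', mul_smul] at h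
  exact smul_right_injective _ ht.ne' h

lemma postcomp {X : E → F} (hX : PosHomogeneous k X) (L : F →ₗ[ℝ] G) :
    PosHomogeneous k fun x ↦ L (X x) := fun _ ht x ↦
  (congrArg L (hX ht x)).trans (map_smul L _ _)

lemma fderiv_apply_self {X : E → F} (hX : PosHomogeneous k X) {x : E}
    (hX_diff : DifferentiableAt ℝ X x) : fderiv ℝ X x x = (k : ℝ) • X x := by
  have along_ray : HasDerivAt (fun t : ℝ ↦ X (t • x)) (fderiv ℝ X x x) 1 := by
    have hX_diff' : HasFDerivAt X (fderiv ℝ X x) ((1 : ℝ) • x) := by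
      simpa only [one_smul] using hX_diff.hasFDerivAt
    simpa [Function.comp_def] using
      hX_diff'.comp_hasDerivAt (1 : ℝ) ((hasDerivAt_id (1 : ℝ)).smul_const x)
  have along_ray' : HasDerivAt (fun t : ℝ ↦ X (t • x)) ((k : ℝ) • X x) 1 := by
    have power : HasDerivAt (fun t : ℝ ↦ t ^ k • X x) ((k : ℝ) • X x) 1 := by
      simpa using (hasDerivAt_pow k (1 : ℝ)).smul_const (X x)
    refine power.congr_of_eventuallyEq ?_
    filter_upwards [lt_mem_nhds zero_lt_one] with t ht using hX ht x
  exact along_ray.unique along_ray'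

end PosHomogeneous

section UnitSphere

variable {E : Type*} [NormedAddCommGroup E]

lemma continuous_comp_coe_sphere {F : Type*} [TopologicalSpace F] {f : E → F}
    (hf : ContinuousOn f {0}ᶜ) : Continuous fun u : sphere (0 : E) 1 ↦ f u :=
  hf.comp_continuous continuous_subtype_val ne_zero_of_mem_unit_sphere

variable [NormedSpace ℝ E]

lemma exists_pos_smul_sphere_eq {x : E} (hx : x ≠ 0) :
    ∃ (u : sphere (0 : E) 1) (r : ℝ), 0 < r ∧ r • (u : E) = x :=
  ⟨⟨‖x‖⁻¹ • x, by simpa using norm_smul_inv_norm (𝕜 := ℝ) hx⟩, ‖x‖, norm_pos_iff.2 hx,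
    smul_inv_smul₀ (norm_ne_zero_iff.2 hx) x⟩

lemma eq_of_smul_sphere_eq_smul_sphere {u v : sphere (0 : E) 1} {r s : ℝ} (hr : 0 < r) (hs : 0 < s)
    (h : r • (u : E) = s • (v : E)) : r = s ∧ u = v := by
  have hrs : r = s := by
    simpa [norm_smul, abs_of_pos hr, abs_of_pos hs] using congrArg norm h
  subst hrs
  exact ⟨rfl, Subtype.ext (smul_right_injective _ hr.ne' h)⟩

end UnitSphere

section PuncturedStar

variable {E : Type*} [NormedAddCommGroup E] [NormedSpace ℝ E] {φ : sphere (0 : E) 1 → ℝ}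

/-- The star-shaped open set with radial function `φ`, without its centre `0`. -/
def puncturedStar (φ : sphere (0 : E) 1 → ℝ) : Set E :=
  {x | ∃ (u : sphere (0 : E) 1) (r : ℝ), 0 < r ∧ r < φ u ∧ r • (u : E) = x}

lemma smul_mem_puncturedStar {u : sphere (0 : E) 1} {r : ℝ} (hr : 0 < r) :
    r • (u : E) ∈ puncturedStar φ ↔ r < φ u := by
  refine ⟨?_, fun h ↦ ⟨u, r, hr, h, rfl⟩⟩
  rintro ⟨v, s, hs, hsv, h⟩
  obtain ⟨rfl, rfl⟩ := eq_of_smul_sphere_eq_smul_sphere hs hr h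
  exact hsv

lemma puncturedStar_subset_compl_zero : puncturedStar φ ⊆ {0}ᶜ := by
  rintro _ ⟨u, r, hr, -, rfl⟩
  exact smul_ne_zero hr.ne' (ne_zero_of_mem_unit_sphere u)

end PuncturedStar

section Polar

variable {E : Type*} [NormedAddCommGroup E] [NormedSpace ℝ E] [FiniteDimensional ℝ E]
  [MeasurableSpace E] [BorelSpace E] (μ : Measure E) [μ.IsAddHaarMeasure]

lemma lintegral_eq_lintegral_sphere_prod [Nontrivial E] (f : E → ℝ≥0∞) :
    ∫⁻ x, f x ∂μ = ∫⁻ p : sphere (0 : E) 1 × Set.Ioi (0 : ℝ), f ((p.2 : ℝ) • (p.1 : E))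
      ∂(μ.toSphere.prod (Measure.volumeIoiPow (Module.finrank ℝ E - 1))) := by
  rw [← μ.measurePreserving_homeomorphUnitSphereProd.lintegral_comp_emb
    (homeomorphUnitSphereProd E).measurableEmbedding]
  simp only [← homeomorphUnitSphereProd_symm_apply_coe, Homeomorph.symm_apply_apply]
  rw [lintegral_subtype_comap (measurableSet_singleton _).compl, restrict_compl_singleton]

lemma integral_eq_integral_sphere_prod [Nontrivial E] (f : E → ℝ) :
    ∫ x, f x ∂μ = ∫ p : sphere (0 : E) 1 × Set.Ioi (0 : ℝ), f ((p.2 : ℝ) • (p.1 : E))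
      ∂(μ.toSphere.prod (Measure.volumeIoiPow (Module.finrank ℝ E - 1))) := by
  rw [← μ.measurePreserving_homeomorphUnitSphereProd.integral_comp
    (homeomorphUnitSphereProd E).measurableEmbedding]
  simp only [← homeomorphUnitSphereProd_symm_apply_coe, Homeomorph.symm_apply_apply]
  rw [integral_subtype_comap (measurableSet_singleton _).compl, restrict_compl_singleton]

lemma integral_comp_norm_mul [Nontrivial E] {k : ℕ} {f : E → ℝ} (hf : PosHomogeneous k f)
    (η : ℝ → ℝ) :
    ∫ x, η ‖x‖ * f x ∂μ =
      (∫ u : sphere (0 : E) 1, f u ∂μ.toSphere) *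
        ∫ r : Set.Ioi (0 : ℝ), η r * r ^ k ∂(Measure.volumeIoiPow (Module.finrank ℝ E - 1)) := by
  rw [integral_eq_integral_sphere_prod, ← integral_prod_mul]
  congr 1 with ⟨u, r, hr : 0 < r⟩
  rw [hf hr, norm_smul, norm_eq_of_mem_sphere, Real.norm_of_nonneg hr.le, smul_eq_mul, mul_one]
  ring

variable {φ : sphere (0 : E) 1 → ℝ}

lemma measurableSet_puncturedStar (hφ : Continuous φ) : MeasurableSet (puncturedStar φ) := by
  have region : MeasurableSet {p : sphere (0 : E) 1 × Set.Ioi (0 : ℝ) | (p.2 : ℝ) < φ p.1} :=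
    measurableSet_lt (by fun_prop) (by fun_prop)
  convert (measurableSet_singleton (0 : E)).compl.subtype_image
    ((homeomorphUnitSphereProd E).symm.measurableEmbedding.measurableSet_image.2 region)
  ext x
  constructor
  · rintro ⟨u, r, hr, h, rfl⟩
    exact ⟨_, ⟨(u, ⟨r, hr⟩), h, rfl⟩, by simp⟩
  · rintro ⟨_, ⟨⟨u, r, hr⟩, h, rfl⟩, rfl⟩
    exact ⟨u, r, hr, h, by simp⟩

lemma setLIntegral_puncturedStar [Nontrivial E] (hφ : Continuous φ) (hφ₀ : ∀ u, 0 < φ u)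
    {f : E → ℝ≥0∞} (hf : Measurable f) (hf_ray : ∀ ⦃r : ℝ⦄, 0 < r → ∀ x, f (r • x) = f x) :
    ∫⁻ x in puncturedStar φ, f x ∂μ =
      ∫⁻ u : sphere (0 : E) 1, f u *
        ENNReal.ofReal (φ u ^ Module.finrank ℝ E / Module.finrank ℝ E) ∂μ.toSphere := by
  have indicator_eq (u : sphere (0 : E) 1) (r : Set.Ioi (0 : ℝ)) :
      (puncturedStar φ).indicator f ((r : ℝ) • (u : E)) =
        (Set.Iio (⟨φ u, hφ₀ u⟩ : Set.Ioi (0 : ℝ))).indicator (fun _ ↦ f u) r := by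
    classical
    simp only [Set.indicator_apply, smul_mem_puncturedStar (Set.mem_Ioi.1 r.2),
      hf_ray (Set.mem_Ioi.1 r.2), Set.mem_Iio, ← Subtype.coe_lt_coe]
  have measurable : Measurable fun p : sphere (0 : E) 1 × Set.Ioi (0 : ℝ) ↦
      (puncturedStar φ).indicator f ((p.2 : ℝ) • (p.1 : E)) :=
    (hf.indicator (measurableSet_puncturedStar hφ)).comp (by fun_prop)
  have dim_pos : 1 ≤ Module.finrank ℝ E := Module.finrank_pos
  rw [← lintegral_indicator (measurableSet_puncturedStar hφ), lintegral_eq_lintegral_sphere_prod,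
    lintegral_prod _ measurable.aemeasurable]
  refine lintegral_congr fun u ↦ ?_
  simp only [indicator_eq]
  rw [lintegral_indicator_const measurableSet_Iio, Measure.volumeIoiPow_apply_Iio,
    Nat.sub_add_cancel dim_pos, Nat.cast_pred dim_pos, sub_add_cancel]

lemma measure_image_puncturedStar [Nontrivial E] {Φ : E → E} (hΦ : PosHomogeneous 1 Φ)
    (hΦ_diff : ∀ x ≠ 0, DifferentiableAt ℝ Φ x) (hΦ_inj : Set.InjOn Φ {0}ᶜ)
    (hφ : Continuous φ) (hφ₀ : ∀ u, 0 < φ u) :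
    μ (Φ '' puncturedStar φ) = ∫⁻ u : sphere (0 : E) 1,
      ENNReal.ofReal |(fderiv ℝ Φ u).det| *
        ENNReal.ofReal (φ u ^ Module.finrank ℝ E / Module.finrank ℝ E)
        ∂μ.toSphere := by
  rw [← lintegral_abs_det_fderiv_eq_addHaar_image μ (measurableSet_puncturedStar hφ)
    (fun x hx ↦ (hΦ_diff x (puncturedStar_subset_compl_zero hx)).hasFDerivAt.hasFDerivWithinAt)
    (hΦ_inj.mono puncturedStar_subset_compl_zero)]
  refine setLIntegral_puncturedStar μ hφ hφ₀
    (ContinuousLinearMap.continuous_det.measurable.comp (measurable_fderiv ℝ Φ)).abs.ennreal_ofReal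
    fun r hr x ↦ ?_
  rw [hΦ.fderiv hr, pow_zero, one_smul]

lemma measurableSet_image_puncturedStar {Φ : E → E} (hΦ_diff : ∀ x ≠ 0, DifferentiableAt ℝ Φ x)
    (hΦ_inj : Set.InjOn Φ {0}ᶜ) (hφ : Continuous φ) : MeasurableSet (Φ '' puncturedStar φ) :=
  measurable_image_of_fderivWithin (measurableSet_puncturedStar hφ)
    (fun x hx ↦ (hΦ_diff x (puncturedStar_subset_compl_zero hx)).hasFDerivAt.hasFDerivWithinAt)
    (hΦ_inj.mono puncturedStar_subset_compl_zero)

end Polar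

section Divergence

variable {E : Type*} [NormedAddCommGroup E] [NormedSpace ℝ E]

/-- The divergence of the vector field `X`, as the trace of its derivative. -/
def divergence (X : E → E) (x : E) : ℝ := LinearMap.trace ℝ E (fderiv ℝ X x)

lemma PosHomogeneous.divergence {k : ℕ} {X : E → E} (hX : PosHomogeneous (k + 1) X) :
    PosHomogeneous k (divergence X) :=
  hX.fderiv.postcomp (LinearMap.trace ℝ E ∘ₗ ContinuousLinearMap.coeLM ℝ)

lemma continuousOn_divergence [FiniteDimensional ℝ E] {X : E → E} {s : Set E} (hs : IsOpen s)
    (hX : ContDiffOn ℝ 1 X s) : ContinuousOn (divergence X) s :=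
  (LinearMap.trace ℝ E ∘ₗ
    ContinuousLinearMap.coeLM ℝ).continuous_of_finiteDimensional.comp_continuousOn
    (hX.continuousOn_fderiv_of_isOpen hs le_rfl)

lemma divergence_sub_const (X : E → E) (c x : E) :
    divergence (fun y ↦ X y - c) x = divergence X x := by
  rw [divergence, fderiv_sub_const, divergence]

lemma divergence_const (c x : E) : divergence (fun _ ↦ c) x = 0 := by
  simp [divergence]

lemma divergence_smul [FiniteDimensional ℝ E] {f : E → ℝ} {X : E → E} {x : E}
    (hf : DifferentiableAt ℝ f x) (hX : DifferentiableAt ℝ X x) :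
    divergence (fun y ↦ f y • X y) x = f x * divergence X x + fderiv ℝ f x (X x) := by
  have trace_smulRight :
      LinearMap.trace ℝ E ((fderiv ℝ f x).smulRight (X x)) = fderiv ℝ f x (X x) :=
    LinearMap.trace_smulRight _ _
  rw [divergence, fderiv_fun_smul hf hX, ContinuousLinearMap.toLinearMap_add, map_add,
    trace_smulRight]
  simp [divergence]

lemma divergence_add {X Y : E → E} {x : E} (hX : DifferentiableAt ℝ X x)
    (hY : DifferentiableAt ℝ Y x) :
    divergence (fun y ↦ X y + Y y) x = divergence X x + divergence Y x := by
  rw [divergence, fderiv_fun_add hX hY, ContinuousLinearMap.toLinearMap_add, map_add]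
  rfl

lemma integral_fderiv_eq_zero {F : Type*} [NormedAddCommGroup F] [NormedSpace ℝ F]
    [FiniteDimensional ℝ E] [MeasurableSpace E] [BorelSpace E] (μ : Measure E)
    [μ.IsAddHaarMeasure] {X : E → F} (hX : ContDiff ℝ 1 X) (hX_supp : HasCompactSupport X) :
    ∫ x, fderiv ℝ X x ∂μ = 0 := by
  have integrable : Integrable (fderiv ℝ X) μ :=
    (hX.continuous_fderiv one_ne_zero).integrable_of_hasCompactSupport (hX_supp.fderiv ℝ)
  ext v
  have by_parts := integral_smul_fderiv_eq_neg_fderiv_smul_of_integrable (μ := μ) (v := v)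
    (f := fun _ ↦ (1 : ℝ)) (g := X) (by simp)
    (by simpa using integrable.apply_continuousLinearMap v)
    (by simpa using hX.continuous.integrable_of_hasCompactSupport hX_supp)
    (fun _ _ ↦ differentiableAt_const _) (fun x _ ↦ hX.differentiable one_ne_zero x)
  rw [ContinuousLinearMap.integral_apply integrable]
  simpa using by_parts

lemma integral_divergence_eq_zero [FiniteDimensional ℝ E] [MeasurableSpace E] [BorelSpace E]
    (μ : Measure E) [μ.IsAddHaarMeasure] {X : E → E} (hX : ContDiff ℝ 1 X)
    (hX_supp : HasCompactSupport X) : ∫ x, divergence X x ∂μ = 0 := by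
  have integrable : Integrable (fderiv ℝ X) μ :=
    (hX.continuous_fderiv one_ne_zero).integrable_of_hasCompactSupport (hX_supp.fderiv ℝ)
  have trace_comm := (LinearMap.toContinuousLinearMap
    (LinearMap.trace ℝ E ∘ₗ ContinuousLinearMap.coeLM ℝ)).integral_comp_comm integrable
  simpa [divergence, integral_fderiv_eq_zero μ hX hX_supp] using trace_comm

end Divergence

lemma hasCompactSupport_comp_norm_sq {E : Type*} [NormedAddCommGroup E] [ProperSpace E] {η : ℝ → ℝ}
    (hη : HasCompactSupport η) :
    HasCompactSupport fun x : E ↦ η (‖x‖ ^ 2) := by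
  obtain ⟨R, hR⟩ := hη.isBounded.subset_closedBall 0
  refine HasCompactSupport.intro (isCompact_closedBall (0 : E) (√R)) fun x hx ↦
    image_eq_zero_of_notMem_tsupport fun hmem ↦ hx ?_
  have hxR : ‖x‖ ^ 2 ≤ R := by simpa using hR hmem
  simpa using Real.le_sqrt_of_sq_le hxR

section RadialCutoff

variable {E F : Type*} [NormedAddCommGroup E] [InnerProductSpace ℝ E] [NormedAddCommGroup F]
  [NormedSpace ℝ F] {η : ℝ → ℝ}

lemma contDiff_comp_norm_sq_smul {k : WithTop ℕ∞} {X : E → F} (hη : ContDiff ℝ k η)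
    (hη₀ : 0 ∉ tsupport η) (hX : ContDiffOn ℝ k X {0}ᶜ) :
    ContDiff ℝ k fun x ↦ η (‖x‖ ^ 2) • X x := by
  rw [contDiff_iff_contDiffAt]
  intro x
  obtain rfl | hx := eq_or_ne x 0
  · have norm_sq_tendsto : Filter.Tendsto (fun y : E ↦ ‖y‖ ^ 2) (𝓝 0) (𝓝 0) :=
      (continuous_norm.pow 2).tendsto' _ _ (by simp)
    refine contDiffAt_const (c := (0 : F)) |>.congr_of_eventuallyEq ?_
    filter_upwards [norm_sq_tendsto.eventually (notMem_tsupport_iff_eventuallyEq.1 hη₀)] with y hy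
    simp [hy]
  · exact (hη.comp (contDiff_norm_sq ℝ)).contDiffAt.smul
      (hX.contDiffAt (isOpen_compl_singleton.mem_nhds hx))

variable [FiniteDimensional ℝ E]

lemma divergence_comp_norm_sq_smul {X : E → E} {x : E} (hη : Differentiable ℝ η)
    (hX : DifferentiableAt ℝ X x) :
    divergence (fun y ↦ η (‖y‖ ^ 2) • X y) x =
      η (‖x‖ ^ 2) * divergence X x + 2 * deriv η (‖x‖ ^ 2) * ⟪x, X x⟫_ℝ := by
  have cutoff : HasFDerivAt (fun y : E ↦ η (‖y‖ ^ 2)) (deriv η (‖x‖ ^ 2) • 2 • innerSL ℝ x) x :=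
    (hη (‖x‖ ^ 2)).hasDerivAt.comp_hasFDerivAt x (hasStrictFDerivAt_norm_sq x).hasFDerivAt
  rw [divergence_smul cutoff.differentiableAt hX, cutoff.fderiv]
  simp only [_root_.smul_apply, innerSL_apply_apply, smul_eq_mul, nsmul_eq_mul, Nat.cast_ofNat]
  ring

variable [MeasurableSpace E] [BorelSpace E] (μ : Measure E) [μ.IsAddHaarMeasure]

lemma integrable_comp_norm_sq_mul {f : E → ℝ} (hη : Continuous η) (hη_supp : HasCompactSupport η)
    (hη₀ : 0 ∉ tsupport η) (hf : ContinuousOn f {0}ᶜ) :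
    Integrable (fun x ↦ η (‖x‖ ^ 2) * f x) μ :=
  (contDiff_comp_norm_sq_smul (contDiff_zero.2 hη) hη₀ (contDiffOn_zero.2 hf)).continuous
    |>.integrable_of_hasCompactSupport (hasCompactSupport_comp_norm_sq hη_supp).mul_right

variable [Nontrivial E]

lemma integral_sphere_divergence_mul_add {X : E → E} (hη : ContDiff ℝ 1 η)
    (hη_supp : HasCompactSupport η) (hη₀ : 0 ∉ tsupport η) (hX : ContDiffOn ℝ 1 X {0}ᶜ)
    (hX_homog : PosHomogeneous 1 X) :
    (∫ u : sphere (0 : E) 1, divergence X u ∂μ.toSphere) *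
        (∫ r : Set.Ioi (0 : ℝ), η ((r : ℝ) ^ 2) * (r : ℝ) ^ 0
          ∂Measure.volumeIoiPow (Module.finrank ℝ E - 1)) +
      (∫ u : sphere (0 : E) 1, ⟪(u : E), X u⟫_ℝ ∂μ.toSphere) *
        (∫ r : Set.Ioi (0 : ℝ), 2 * deriv η ((r : ℝ) ^ 2) * (r : ℝ) ^ 2
          ∂Measure.volumeIoiPow (Module.finrank ℝ E - 1)) = 0 := by
  have inner_homog : PosHomogeneous 2 fun x ↦ ⟪x, X x⟫_ℝ := fun t ht x ↦ by
    simp only [hX_homog ht, inner_smul_left, inner_smul_right, smul_eq_mul, conj_trivial]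
    ring
  have integrable_main : Integrable (fun x : E ↦ η (‖x‖ ^ 2) * divergence X x) μ :=
    integrable_comp_norm_sq_mul μ hη.continuous hη_supp hη₀
      (continuousOn_divergence isOpen_compl_singleton hX)
  have integrable_cutoff :
      Integrable (fun x : E ↦ 2 * deriv η (‖x‖ ^ 2) * ⟪x, X x⟫_ℝ) μ := by
    simpa only [mul_assoc, id] using (integrable_comp_norm_sq_mul μ (hη.continuous_deriv le_rfl)
      hη_supp.deriv (fun h ↦ hη₀ (tsupport_deriv_subset h))
      (continuousOn_id.inner hX.continuousOn)).const_mul 2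
  rw [← integral_comp_norm_mul μ hX_homog.divergence fun r ↦ η (r ^ 2),
    ← integral_comp_norm_mul μ inner_homog fun r ↦ 2 * deriv η (r ^ 2),
    ← integral_add integrable_main integrable_cutoff,
    ← integral_divergence_eq_zero μ (contDiff_comp_norm_sq_smul (k := 1) hη hη₀ hX)
      (hasCompactSupport_comp_norm_sq hη_supp).smul_right]
  refine integral_congr_ae ?_
  filter_upwards [compl_mem_ae_iff.2 (measure_singleton (0 : E))] with x hx
  exact (divergence_comp_norm_sq_smul (hη.differentiable one_ne_zero)
    ((hX.differentiableOn one_ne_zero).differentiableAt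
      (isOpen_compl_singleton.mem_nhds hx))).symm

lemma integral_comp_sq_volumeIoiPow_pos (hη : Continuous η) (hη_supp : HasCompactSupport η)
    (hη_nonneg : ∀ s, 0 ≤ η s) {s : ℝ} (hs : 0 ≤ s) (hηs : η s ≠ 0) :
    0 < ∫ r : Set.Ioi (0 : ℝ), η ((r : ℝ) ^ 2) * (r : ℝ) ^ 0
      ∂Measure.volumeIoiPow (Module.finrank ℝ E - 1) := by
  obtain ⟨x, hx⟩ := exists_norm_eq E (Real.sqrt_nonneg s)
  have total_pos : 0 < ∫ y : E, η (‖y‖ ^ 2) * 1 :=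
    (show Continuous fun y : E ↦ η (‖y‖ ^ 2) * 1 by fun_prop)
      |>.integral_pos_of_hasCompactSupport_nonneg_nonzero (x := x)
      (by simpa using hasCompactSupport_comp_norm_sq hη_supp) (fun y ↦ by simpa using hη_nonneg _)
      (by simpa [hx, Real.sq_sqrt hs] using hηs)
  have one_homog : PosHomogeneous 0 fun _ : E ↦ (1 : ℝ) := fun t _ _ ↦ by simp
  rw [integral_comp_norm_mul _ one_homog fun r ↦ η (r ^ 2)] at total_pos
  exact pos_of_mul_pos_right total_pos (integral_nonneg fun _ ↦ zero_le_one)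

lemma integral_sphere_divergence {X : E → E} (hX : ContDiffOn ℝ 1 X {0}ᶜ)
    (hX_homog : PosHomogeneous 1 X) :
    ∫ u : sphere (0 : E) 1, divergence X u ∂μ.toSphere =
      Module.finrank ℝ E * ∫ u : sphere (0 : E) 1, ⟪(u : E), X u⟫_ℝ ∂μ.toSphere := by
  let η : ContDiffBump (2 : ℝ) := ⟨1 / 2, 1, by norm_num, by norm_num⟩
  have zero_notMem : 0 ∉ tsupport η := by
    rw [η.tsupport_eq, mem_closedBall, Real.dist_eq]
    norm_num [η]
  have η_two : η 2 ≠ 0 := by simp [η.one_of_mem_closedBall (mem_closedBall_self η.rIn_pos.le)]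
  have identity {Y : E → E} := integral_sphere_divergence_mul_add (X := Y) μ (η := η) η.contDiff
    η.hasCompactSupport zero_notMem
  have α_pos := integral_comp_sq_volumeIoiPow_pos (E := E) η.continuous η.hasCompactSupport
    (fun _ ↦ η.nonneg) zero_le_two η_two
  have main := identity hX hX_homog
  -- The field `Y = id` determines the ratio of the two radial integrals.
  have radial := identity contDiffOn_id fun t _ x ↦ by simp
  simp only [divergence, fderiv_id, ContinuousLinearMap.coe_id, LinearMap.trace_id, id,
    real_inner_self_eq_norm_sq, norm_eq_of_mem_sphere, one_pow, integral_const, smul_eq_mul,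
    mul_one, mul_assoc, ← mul_add] at radial
  have area_ne_zero : μ.toSphere.real Set.univ ≠ 0 := by
    have : NeZero μ.toSphere := ⟨μ.toSphere_ne_zero⟩
    exact measureReal_univ_ne_zero
  have β_eq := (mul_eq_zero.1 radial).resolve_left area_ne_zero
  refine mul_right_cancel₀ α_pos.ne' ?_
  simp only [mul_assoc] at main β_eq ⊢
  linear_combination main - (∫ u : sphere (0 : E) 1, ⟪(u : E), X u⟫_ℝ ∂μ.toSphere) * β_eq

end RadialCutoff

/-! ### Gradient and Hessian of a support function -/

section Gradient

variable {E : Type*} [NormedAddCommGroup E] [InnerProductSpace ℝ E] [CompleteSpace E] {f : E → ℝ}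

protected lemma PosHomogeneous.gradient {k : ℕ} (hf : PosHomogeneous (k + 1) f) :
    PosHomogeneous k (gradient f) :=
  hf.fderiv.postcomp (InnerProductSpace.toDual ℝ E).symm.toLinearEquiv.toLinearMap

lemma PosHomogeneous.inner_gradient_self (hf : PosHomogeneous 1 f) {x : E}
    (hfx : DifferentiableAt ℝ f x) : ⟪x, gradient f x⟫_ℝ = f x := by
  simpa [inner_gradient_left, real_inner_comm] using hf.fderiv_apply_self hfx

lemma contDiffOn_gradient {s : Set E} (hs : IsOpen s) {m k : WithTop ℕ∞} (hf : ContDiffOn ℝ k f s)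
    (hmk : m + 1 ≤ k) : ContDiffOn ℝ m (gradient f) s :=
  (InnerProductSpace.toDual ℝ E).symm.toContinuousLinearEquiv.contDiff.comp_contDiffOn
    (hf.fderiv_of_isOpen hs hmk)

lemma inner_fderiv_gradient (x v w : E) :
    ⟪fderiv ℝ (gradient f) x v, w⟫_ℝ = fderiv ℝ (fderiv ℝ f) x v w := by
  have gradient_fderiv : fderiv ℝ (gradient f) x = _ :=
    (InnerProductSpace.toDual ℝ E).symm.toContinuousLinearEquiv.comp_fderiv
  rw [gradient_fderiv]
  exact InnerProductSpace.toDual_symm_apply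

lemma gradient_eq_of_inner_le {x w : E} (hf : DifferentiableAt ℝ f x) (hle : ∀ y, ⟪y, w⟫_ℝ ≤ f y)
    (heq : ⟪x, w⟫_ℝ = f x) : gradient f x = w := by
  have is_min : IsLocalMin (fun y ↦ f y - innerSL ℝ w y) x := .of_forall fun y ↦ by
    simpa [real_inner_comm, heq] using hle y
  have fderiv_eq := is_min.hasFDerivAt_eq_zero (hf.hasFDerivAt.sub (innerSL ℝ w).hasFDerivAt)
  refine ext_inner_right ℝ fun v ↦ ?_
  rw [inner_gradient_left, sub_eq_zero.1 fderiv_eq, innerSL_apply_apply]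

end Gradient

section SupportFunction

variable {n : ℕ} {K : Set (Eu n)}

lemma inner_le_sfn (hK : IsCompact K) {y : Eu n} (hy : y ∈ K) (z : Eu n) : ⟪z, y⟫_ℝ ≤ sfn K z :=
  le_csSup (hK.image (by fun_prop)).bddAbove ⟨y, hy, rfl⟩

lemma exists_inner_eq_sfn (hK : IsCompact K) (hK_ne : K.Nonempty) (z : Eu n) :
    ∃ y ∈ K, ⟪z, y⟫_ℝ = sfn K z :=
  (hK.image (by fun_prop)).sSup_mem (hK_ne.image _)

lemma posHomogeneous_sfn (K : Set (Eu n)) : PosHomogeneous 1 (sfn K) := fun t ht z ↦ by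
  simp only [sfn, inner_smul_left, conj_trivial, pow_one, smul_eq_mul]
  rw [← smul_eq_mul t, ← Real.sSup_smul_of_nonneg ht.le, ← Set.image_smul, Set.image_image]
  rfl

lemma sfn_add_le (hK : IsCompact K) (hK_ne : K.Nonempty) (z w : Eu n) :
    sfn K (z + w) ≤ sfn K z + sfn K w := by
  obtain ⟨y, hy, hyzw⟩ := exists_inner_eq_sfn hK hK_ne (z + w)
  rw [← hyzw, inner_add_left]
  exact add_le_add (inner_le_sfn hK hy z) (inner_le_sfn hK hy w)

end SupportFunction

lemma det_pos_of_inner_pos {E : Type*} [NormedAddCommGroup E] [InnerProductSpace ℝ E]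
    [FiniteDimensional ℝ E] {T : E →ₗ[ℝ] E} (hT : T.IsSymmetric)
    (hT_pos : ∀ v, v ≠ 0 → 0 < ⟪T v, v⟫_ℝ) : 0 < LinearMap.det T := by
  rw [hT.det_eq_prod_eigenvalues rfl]
  refine Finset.prod_pos fun i _ ↦ ?_
  have h := hT_pos _ ((hT.eigenvectorBasis rfl).orthonormal.ne_zero i)
  rwa [hT.apply_eigenvectorBasis, real_inner_smul_left, real_inner_self_eq_norm_sq,
    (hT.eigenvectorBasis rfl).norm_eq_one, one_pow, mul_one] at h

namespace IsSmoothConvexBody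

variable {n : ℕ} {K : Set (Eu n)}

lemma nonempty (hK : IsSmoothConvexBody K) : K.Nonempty :=
  hK.interior_nonempty.mono interior_subset

lemma differentiableAt_sfn (hK : IsSmoothConvexBody K) {x : Eu n} (hx : x ≠ 0) :
    DifferentiableAt ℝ (sfn K) x :=
  (hK.smooth.differentiableOn (by simp)).differentiableAt (isOpen_compl_singleton.mem_nhds hx)

lemma gradient_sfn_eq (hK : IsSmoothConvexBody K) {x y : Eu n} (hx : x ≠ 0) (hy : y ∈ K)
    (hxy : ⟪x, y⟫_ℝ = sfn K x) : gradient (sfn K) x = y :=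
  gradient_eq_of_inner_le (hK.differentiableAt_sfn hx) (inner_le_sfn hK.compact hy) hxy

lemma gradient_sfn_mem (hK : IsSmoothConvexBody K) {x : Eu n} (hx : x ≠ 0) :
    gradient (sfn K) x ∈ K := by
  obtain ⟨y, hy, hxy⟩ := exists_inner_eq_sfn hK.compact hK.nonempty x
  rwa [hK.gradient_sfn_eq hx hy hxy]

lemma inner_gradient_sfn_le (hK : IsSmoothConvexBody K) {x : Eu n} (hx : x ≠ 0) (z : Eu n) :
    ⟪z, gradient (sfn K) x⟫_ℝ ≤ sfn K z :=
  inner_le_sfn hK.compact (hK.gradient_sfn_mem hx) z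

lemma inner_gradient_sfn_self (hK : IsSmoothConvexBody K) {x : Eu n} (hx : x ≠ 0) :
    ⟪x, gradient (sfn K) x⟫_ℝ = sfn K x :=
  (posHomogeneous_sfn K).inner_gradient_self (hK.differentiableAt_sfn hx)

lemma sfn_pos (hK : IsSmoothConvexBody K) {x : Eu n} (hx : x ≠ 0) : 0 < sfn K x := by
  obtain ⟨u, r, hr, rfl⟩ := exists_pos_smul_sphere_eq hx
  rw [posHomogeneous_sfn K hr]
  exact smul_pos (pow_pos hr 1) (hK.pos u)

lemma contDiffOn_gradient_sfn (hK : IsSmoothConvexBody K) :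
    ContDiffOn ℝ (⊤ : ℕ∞) (gradient (sfn K)) {0}ᶜ :=
  contDiffOn_gradient isOpen_compl_singleton hK.smooth le_rfl

lemma hasFDerivAt_gradient_sfn (hK : IsSmoothConvexBody K) {x : Eu n} (hx : x ≠ 0) :
    HasFDerivAt (gradient (sfn K)) (hessA K x) x :=
  ((hK.contDiffOn_gradient_sfn.differentiableOn (by simp)).differentiableAt
    (isOpen_compl_singleton.mem_nhds hx)).hasFDerivAt

lemma inner_hessA_comm (hK : IsSmoothConvexBody K) {x : Eu n} (hx : x ≠ 0) (v w : Eu n) :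
    ⟪hessA K x v, w⟫_ℝ = ⟪v, hessA K x w⟫_ℝ := by
  have smooth_at : ContDiffAt ℝ (⊤ : ℕ∞) (sfn K) x :=
    hK.smooth.contDiffAt (isOpen_compl_singleton.mem_nhds hx)
  rw [hessA, inner_fderiv_gradient, real_inner_comm, inner_fderiv_gradient]
  exact (smooth_at.of_le (WithTop.coe_le_coe.2 le_top)).isSymmSndFDerivAt (n := 2) (by simp) v w

lemma hessA_apply_self (hK : IsSmoothConvexBody K) {x : Eu n} (hx : x ≠ 0) : hessA K x x = 0 := by
  simpa [hessA] using (posHomogeneous_sfn K).gradient.fderiv_apply_self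
    (hK.hasFDerivAt_gradient_sfn hx).differentiableAt

lemma inner_hessA_self_right (hK : IsSmoothConvexBody K) {x : Eu n} (hx : x ≠ 0) (v : Eu n) :
    ⟪x, hessA K x v⟫_ℝ = 0 := by
  rw [← hK.inner_hessA_comm hx, hK.hessA_apply_self hx, inner_zero_left]

lemma inner_hessA_pos (hK : IsSmoothConvexBody K) (u : Sph n) {v : Eu n}
    (hv : v ∉ ℝ ∙ (u : Eu n)) : 0 < ⟪hessA K u v, v⟫_ℝ := by
  have hu := ne_zero_of_mem_unit_sphere u
  let w : Eu n := v - ⟪(u : Eu n), v⟫_ℝ • u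
  have hw : w ≠ 0 := fun h ↦ hv (Submodule.mem_span_singleton.2 ⟨_, (sub_eq_zero.1 h).symm⟩)
  have tens_w : tens (u : Eu n) w = 0 := by
    simp [tens, w, inner_sub_right, inner_smul_right]
  have hess_w : hessA K u w = hessA K u v := by
    simp [w, hK.hessA_apply_self hu]
  have pos := hK.posdef u w hw
  rwa [add_apply, tens_w, add_zero, hess_w, inner_sub_right, inner_smul_right,
    real_inner_comm (u : Eu n), hK.inner_hessA_self_right hu, mul_zero, sub_zero] at pos

lemma inner_hessA_nonneg (hK : IsSmoothConvexBody K) (u : Sph n) (v : Eu n) :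
    0 ≤ ⟪hessA K u v, v⟫_ℝ := by
  by_cases hv : v ∈ ℝ ∙ (u : Eu n)
  · obtain ⟨c, rfl⟩ := Submodule.mem_span_singleton.1 hv
    simp [hK.hessA_apply_self (ne_zero_of_mem_unit_sphere u)]
  · exact (hK.inner_hessA_pos u hv).le

lemma dens_pos (hK : IsSmoothConvexBody K) (u : Sph n) : 0 < dens K u := by
  refine mul_pos (hK.pos u) (det_pos_of_inner_pos (fun v w ↦ ?_) (hK.posdef u))
  simp only [ContinuousLinearMap.coe_coe, add_apply, inner_add_left,
    inner_add_right, hK.inner_hessA_comm (ne_zero_of_mem_unit_sphere u), tens,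
    ContinuousLinearMap.smulRight_apply, innerSL_apply_apply, inner_smul_left, inner_smul_right]
  simp [mul_comm, real_inner_comm]

lemma continuous_sfn (hK : IsSmoothConvexBody K) : Continuous fun u : Sph n ↦ sfn K u :=
  continuous_comp_coe_sphere hK.smooth.continuousOn

lemma continuous_gradient_sfn (hK : IsSmoothConvexBody K) :
    Continuous fun u : Sph n ↦ gradient (sfn K) u :=
  continuous_comp_coe_sphere hK.contDiffOn_gradient_sfn.continuousOn

lemma continuousOn_hessA (hK : IsSmoothConvexBody K) : ContinuousOn (hessA K) {0}ᶜ :=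
  hK.contDiffOn_gradient_sfn.continuousOn_fderiv_of_isOpen isOpen_compl_singleton (by simp)

lemma continuous_hessA (hK : IsSmoothConvexBody K) : Continuous fun u : Sph n ↦ hessA K u :=
  continuous_comp_coe_sphere hK.continuousOn_hessA

lemma continuous_dens (hK : IsSmoothConvexBody K) : Continuous fun u : Sph n ↦ dens K u := by
  have continuous_tens : Continuous fun u : Sph n ↦ tens (u : Eu n) :=
    (ContinuousLinearMap.smulRightL ℝ (Eu n) (Eu n)).continuous₂.comp
      (((innerSL ℝ).continuous.comp continuous_subtype_val).prodMk continuous_subtype_val)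
  exact hK.continuous_sfn.mul
    (ContinuousLinearMap.continuous_det.comp (hK.continuous_hessA.add continuous_tens))

end IsSmoothConvexBody

/-! ### The homogeneous inverse Gauss map -/

/-- The positively 1-homogeneous extension to `ℝ^{n+1}` of the inverse Gauss map `u ↦ ∇h_K(u)`,
which sends the unit normal `u` to the boundary point of `K` where it is attained. It maps the unit
ball onto the interior of `K` (when `0 ∈ interior K`). -/
def invGauss {n : ℕ} (K : Set (Eu n)) (x : Eu n) : Eu n := ‖x‖ • gradient (sfn K) x

lemma hasFDerivAt_norm_sphere {E : Type*} [NormedAddCommGroup E] [InnerProductSpace ℝ E]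
    (u : sphere (0 : E) 1) : HasFDerivAt (fun x : E ↦ ‖x‖) (innerSL ℝ (u : E)) u := by
  have h := (hasStrictFDerivAt_norm_sq (u : E)).hasFDerivAt.sqrt (by simp)
  simp only [norm_nonneg, Real.sqrt_sq, norm_eq_of_mem_sphere, ← Nat.cast_smul_eq_nsmul ℝ,
    smul_smul] at h
  simpa using h

lemma posHomogeneous_invGauss {n : ℕ} (K : Set (Eu n)) : PosHomogeneous 1 (invGauss K) :=
  fun t ht x ↦ by
    simp only [invGauss, norm_smul, (posHomogeneous_sfn K).gradient ht, Real.norm_of_nonneg ht.le,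
      pow_zero, one_smul, pow_one, mul_smul]

lemma invGauss_smul_sphere {n : ℕ} (K : Set (Eu n)) {r : ℝ} (hr : 0 < r) (u : Sph n) :
    invGauss K (r • (u : Eu n)) = r • gradient (sfn K) u := by
  rw [posHomogeneous_invGauss K hr, invGauss, norm_eq_of_mem_sphere, one_smul, pow_one]

instance isFiniteMeasure_sphMeas (n : ℕ) : IsFiniteMeasure (sphMeas n) :=
  inferInstanceAs (IsFiniteMeasure (volume : Measure (Eu n)).toSphere)

lemma integrable_sphMeas {n : ℕ} {F : Type*} [NormedAddCommGroup F] {f : Sph n → F}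
    (hf : Continuous f) : Integrable f (sphMeas n) :=
  hf.integrable_of_hasCompactSupport (.of_compactSpace f)

namespace IsSmoothConvexBody

variable {n : ℕ} {K : Set (Eu n)}

lemma differentiableAt_invGauss (hK : IsSmoothConvexBody K) {x : Eu n} (hx : x ≠ 0) :
    DifferentiableAt ℝ (invGauss K) x :=
  (differentiableAt_id.norm ℝ hx).smul (hK.hasFDerivAt_gradient_sfn hx).differentiableAt

lemma fderiv_invGauss (hK : IsSmoothConvexBody K) (u : Sph n) :
    fderiv ℝ (invGauss K) u =
      hessA K u + (innerSL ℝ (u : Eu n)).smulRight (gradient (sfn K) u) := by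
  have h := (hasFDerivAt_norm_sphere u).smul
    (hK.hasFDerivAt_gradient_sfn (ne_zero_of_mem_unit_sphere u))
  rw [norm_eq_of_mem_sphere, one_smul] at h
  exact h.fderiv

lemma det_fderiv_invGauss (hK : IsSmoothConvexBody K) (u : Sph n) :
    (fderiv ℝ (invGauss K) u).det = dens K u := by
  have hu := ne_zero_of_mem_unit_sphere u
  have factorization : (fderiv ℝ (invGauss K) u : Eu n →ₗ[ℝ] Eu n) =
      LinearMap.transvection (innerSL ℝ (u : Eu n) : Eu n →ₗ[ℝ] ℝ) (gradient (sfn K) u - u) ∘ₗ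
        (hessA K u + tens (u : Eu n) : Eu n →L[ℝ] Eu n) := by
    ext1 v
    simp only [hK.fderiv_invGauss, tens, LinearMap.comp_apply, LinearMap.transvection.apply,
      ContinuousLinearMap.coe_coe, add_apply, ContinuousLinearMap.smulRight_apply,
      innerSL_apply_apply, inner_add_right, inner_smul_right, hK.inner_hessA_self_right hu,
      real_inner_self_eq_norm_sq, norm_eq_of_mem_sphere]
    module
  rw [ContinuousLinearMap.det, factorization, LinearMap.det_comp, LinearMap.transvection.det, dens,
    rK]
  simp [inner_sub_right, hK.inner_gradient_sfn_self hu]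

lemma gradient_sfn_add_smul (hK : IsSmoothConvexBody K) {x y : Eu n} (hx : x ≠ 0) (hy : y ≠ 0)
    (hxy : gradient (sfn K) x = gradient (sfn K) y) {t : ℝ} (ht : 0 ≤ t) :
    gradient (sfn K) (x + t • y) = gradient (sfn K) x := by
  obtain rfl | ht := ht.eq_or_lt
  · simp
  have value : ⟪x + t • y, gradient (sfn K) x⟫_ℝ = sfn K x + sfn K (t • y) := by
    rw [inner_add_left, hK.inner_gradient_sfn_self hx, hxy, real_inner_smul_left,
      hK.inner_gradient_sfn_self hy, posHomogeneous_sfn K ht, pow_one, smul_eq_mul]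
  have ne_zero : x + t • y ≠ 0 := fun h ↦ by
    rw [h, inner_zero_left] at value
    exact (add_pos (hK.sfn_pos hx) (hK.sfn_pos (smul_ne_zero ht.ne' hy))).ne value
  refine hK.gradient_sfn_eq ne_zero (hK.gradient_sfn_mem hx) (le_antisymm ?_ ?_)
  · exact hK.inner_gradient_sfn_le hx _
  · exact (sfn_add_le hK.compact hK.nonempty _ _).trans_eq value.symm

lemma injective_gradient_sfn (hK : IsSmoothConvexBody K) :
    Function.Injective fun u : Sph n ↦ gradient (sfn K) u := by
  intro u v (huv : gradient (sfn K) u = gradient (sfn K) v)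
  have hu := ne_zero_of_mem_unit_sphere u
  have hv := ne_zero_of_mem_unit_sphere v
  have hess_zero : hessA K u v = 0 := by
    have deriv_along : HasDerivAt (fun t : ℝ ↦ gradient (sfn K) (u + t • (v : Eu n)))
        (hessA K u v) 0 := (hK.hasFDerivAt_gradient_sfn hu).hasLineDerivAt v
    exact (uniqueDiffOn_Ici (0 : ℝ) 0 Set.self_mem_Ici).eq_deriv _ deriv_along.hasDerivWithinAt <|
      (hasDerivWithinAt_const 0 _ (gradient (sfn K) u)).congr
        (fun t ht ↦ hK.gradient_sfn_add_smul hu hv huv ht) (by simp)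
  obtain ⟨c, hc⟩ : ∃ c : ℝ, c • (u : Eu n) = v := by
    refine Submodule.mem_span_singleton.1 (by_contra fun h ↦ ?_)
    simpa [hess_zero] using hK.inner_hessA_pos u h
  have c_pos : 0 < c := by
    have h := hK.sfn_pos hv
    rw [← hK.inner_gradient_sfn_self hv, ← huv, ← hc, real_inner_smul_left,
      hK.inner_gradient_sfn_self hu] at h
    exact pos_of_mul_pos_left h (hK.sfn_pos hu).le
  exact (eq_of_smul_sphere_eq_smul_sphere c_pos one_pos (by rw [hc, one_smul])).2

lemma eq_of_smul_gradient_sfn_eq (hK : IsSmoothConvexBody K) {u v : Sph n} {r s : ℝ} (hr : 0 < r)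
    (hs : 0 < s) (h : r • gradient (sfn K) u = s • gradient (sfn K) v) : r = s ∧ u = v := by
  have le_of_eq {u v : Sph n} {r s : ℝ} (hs : 0 < s)
      (h : r • gradient (sfn K) u = s • gradient (sfn K) v) : r ≤ s := by
    refine le_of_mul_le_mul_right ?_ (hK.pos u)
    calc r * sfn K u = ⟪(u : Eu n), r • gradient (sfn K) u⟫_ℝ := by
          rw [real_inner_smul_right, hK.inner_gradient_sfn_self (ne_zero_of_mem_unit_sphere u)]
      _ = s * ⟪(u : Eu n), gradient (sfn K) v⟫_ℝ := by rw [h, real_inner_smul_right]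
      _ ≤ s * sfn K u := by gcongr; exact hK.inner_gradient_sfn_le (ne_zero_of_mem_unit_sphere v) _
  obtain rfl := (le_of_eq hs h).antisymm (le_of_eq hr h.symm)
  exact ⟨rfl, hK.injective_gradient_sfn (smul_right_injective _ hr.ne' h)⟩

lemma injOn_invGauss (hK : IsSmoothConvexBody K) : Set.InjOn (invGauss K) {0}ᶜ := by
  intro x hx y hy hxy
  obtain ⟨u, r, hr, rfl⟩ := exists_pos_smul_sphere_eq hx
  obtain ⟨v, s, hs, rfl⟩ := exists_pos_smul_sphere_eq hy
  rw [invGauss_smul_sphere K hr, invGauss_smul_sphere K hs] at hxy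
  obtain ⟨rfl, rfl⟩ := hK.eq_of_smul_gradient_sfn_eq hr hs hxy
  rfl

lemma exists_smul_gradient_sfn_eq (hK : IsSmoothConvexBody K) {z : Eu n} (hz : z ≠ 0) :
    ∃ (u : Sph n) (r : ℝ), 0 < r ∧ r • gradient (sfn K) u = z := by
  obtain ⟨v, s, hs, hvz⟩ := exists_pos_smul_sphere_eq hz
  -- For `u` maximising `⟪u, z⟫ / h u`, with value `r`, the hyperplane `⟪u, ·⟫ = ⟪u, z⟫` supports
  -- `r • K` at `z`.
  obtain ⟨u, -, hu⟩ := isCompact_univ.exists_isMaxOn ⟨v, Set.mem_univ v⟩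
    (f := fun u : Sph n ↦ ⟪(u : Eu n), z⟫_ℝ / sfn K u)
    (Continuous.div (by fun_prop) hK.continuous_sfn fun u ↦ (hK.pos u).ne').continuousOn
  set r : ℝ := ⟪(u : Eu n), z⟫_ℝ / sfn K u with r_def
  have r_pos : 0 < r := by
    refine (div_pos ?_ (hK.pos v)).trans_le (hu (Set.mem_univ v))
    simpa [← hvz, inner_smul_right] using hs
  have inner_le (w : Eu n) : ⟪w, r⁻¹ • z⟫_ℝ ≤ sfn K w := by
    obtain rfl | hw := eq_or_ne w 0
    · obtain ⟨y, hy⟩ := hK.nonempty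
      simpa using inner_le_sfn hK.compact hy 0
    obtain ⟨w, t, ht, rfl⟩ := exists_pos_smul_sphere_eq hw
    have h : ⟪(w : Eu n), z⟫_ℝ ≤ r * sfn K w := (div_le_iff₀ (hK.pos w)).1 (hu (Set.mem_univ w))
    rw [posHomogeneous_sfn K ht, real_inner_smul_left, real_inner_smul_right, pow_one, smul_eq_mul]
    gcongr
    rwa [inv_mul_le_iff₀ r_pos]
  refine ⟨u, r, r_pos, ?_⟩
  rw [gradient_eq_of_inner_le (hK.differentiableAt_sfn (ne_zero_of_mem_unit_sphere u)) inner_le,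
    smul_inv_smul₀ r_pos.ne']
  rw [real_inner_smul_right, inv_mul_eq_iff_eq_mul₀ r_pos.ne', r_def,
    div_mul_cancel₀ _ (hK.pos u).ne']

lemma mem_image_invGauss_puncturedStar (hK : IsSmoothConvexBody K) {φ : Sph n → ℝ} {z : Eu n}
    (hz : z ≠ 0) (hzφ : ∀ u : Sph n, ⟪(u : Eu n), z⟫_ℝ < sfn K u * φ u) :
    z ∈ invGauss K '' puncturedStar φ := by
  obtain ⟨u, r, hr, rfl⟩ := hK.exists_smul_gradient_sfn_eq hz
  refine ⟨r • u, (smul_mem_puncturedStar hr).2 ?_, invGauss_smul_sphere K hr u⟩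
  have h := hzφ u
  rw [real_inner_smul_right, hK.inner_gradient_sfn_self (ne_zero_of_mem_unit_sphere u),
    mul_comm] at h
  exact lt_of_mul_lt_mul_left h (hK.pos u).le

lemma volume_image_invGauss_puncturedStar (hK : IsSmoothConvexBody K) {φ : Sph n → ℝ}
    (hφ : Continuous φ) (hφ₀ : ∀ u, 0 < φ u) :
    volume (invGauss K '' puncturedStar φ) =
      ENNReal.ofReal ((∫ u : Sph n, dens K u * φ u ^ (n + 1) ∂sphMeas n) / (n + 1)) := by
  have integrand_nonneg (u : Sph n) : 0 ≤ dens K u * φ u ^ (n + 1) / (n + 1) := by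
    have := (hK.dens_pos u).le
    have := (hφ₀ u).le
    positivity
  have integrable : Integrable (fun u : Sph n ↦ dens K u * φ u ^ (n + 1) / (n + 1)) (sphMeas n) :=
    integrable_sphMeas ((hK.continuous_dens.mul (hφ.pow _)).div_const _)
  rw [measure_image_puncturedStar volume (posHomogeneous_invGauss K)
    (fun _ ↦ hK.differentiableAt_invGauss) hK.injOn_invGauss hφ hφ₀, ← integral_div,
    ofReal_integral_eq_lintegral_ofReal integrable (.of_forall integrand_nonneg), sphMeas]
  refine lintegral_congr fun u ↦ ?_
  rw [hK.det_fderiv_invGauss, abs_of_pos (hK.dens_pos u), ← ENNReal.ofReal_mul (hK.dens_pos u).le,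
    finrank_euclideanSpace_fin, mul_div_assoc, Nat.cast_add_one]

end IsSmoothConvexBody

/-! ### A local Brunn–Minkowski inequality -/

lemma le_quadratic_of_deriv2_le {s : Set ℝ} (hs : IsOpen s) (hs_convex : Convex ℝ s) (h₀ : 0 ∈ s)
    {φ φ' φ'' : ℝ → ℝ} {b : ℝ} (hφ : ∀ t ∈ s, HasDerivAt φ (φ' t) t)
    (hφ' : ∀ t ∈ s, HasDerivAt φ' (φ'' t) t) (hφ'' : ∀ t ∈ s, φ'' t ≤ b) {t : ℝ} (ht : t ∈ s) :
    φ t ≤ φ 0 + t * φ' 0 + t ^ 2 / 2 * b := by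
  let ψ (t : ℝ) : ℝ := t * φ' 0 + t ^ 2 / 2 * b - φ t
  have hasDerivAt_ψ (t : ℝ) (ht : t ∈ s) : HasDerivAt ψ (φ' 0 + t * b - φ' t) t := by
    have h := (((hasDerivAt_id t).mul_const (φ' 0)).add
      ((((hasDerivAt_id t).pow 2).div_const 2).mul_const b)).sub (hφ t ht)
    exact h.congr_deriv (by simp)
  have hasDerivAt_ψ' (t : ℝ) (ht : t ∈ s) :
      HasDerivAt (fun t ↦ φ' 0 + t * b - φ' t) (b - φ'' t) t := by
    have h := (((hasDerivAt_id t).mul_const b).const_add (φ' 0)).sub (hφ' t ht)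
    exact h.congr_deriv (by simp)
  have convexOn_ψ : ConvexOn ℝ s ψ := by
    refine convexOn_of_hasDerivWithinAt2_nonneg hs_convex
      (fun t ht ↦ (hasDerivAt_ψ t ht).continuousAt.continuousWithinAt)
      (fun t ht ↦ (hasDerivAt_ψ t (interior_subset ht)).hasDerivWithinAt)
      (fun t ht ↦ (hasDerivAt_ψ' t (interior_subset ht)).hasDerivWithinAt)
      fun t ht ↦ sub_nonneg.2 (hφ'' t (interior_subset ht))
  have rightDeriv_ψ : derivWithin ψ (Set.Ioi 0) 0 = 0 := by
    rw [(hasDerivAt_ψ 0 h₀).hasDerivWithinAt.derivWithin (uniqueDiffWithinAt_Ioi 0)]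
    ring
  have h : ψ 0 ≤ ψ t :=
    convexOn_ψ.isMinOn_of_rightDeriv_eq_zero (by rwa [hs.interior_eq]) rightDeriv_ψ ht
  simp only [ψ] at h
  linarith

lemma eventually_forall_lt_of_continuous {X Y : Type*} [TopologicalSpace X] [TopologicalSpace Y]
    [CompactSpace X] {F G : Y × X → ℝ} (hF : Continuous F) (hG : Continuous G) {y₀ : Y}
    (h₀ : ∀ x, F (y₀, x) < G (y₀, x)) : ∀ᶠ y in 𝓝 y₀, ∀ x, F (y, x) < G (y, x) := by
  simpa using isCompact_univ.eventually_forall_of_forall_eventually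
    (P := fun y x ↦ F (y, x) < G (y, x)) fun x _ ↦
      hF.continuousAt.eventually_lt hG.continuousAt (h₀ x)

lemma exists_continuous_pow_expansion {R : Type*} [CommRing R] [TopologicalSpace R]
    [IsTopologicalRing R] (N : ℕ) : ∃ r : R × R × R → R, Continuous r ∧ ∀ d f g : R,
      (1 + d * f + d ^ 2 * g) ^ N =
        1 + d * (N * f) + d ^ 2 * (N * g + N.choose 2 * f ^ 2) + d ^ 3 * r (d, f, g) := by
  induction N with
  | zero => exact ⟨0, continuous_const, fun d f g ↦ by simp⟩
  | succ N ih =>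
    obtain ⟨r, hr, h⟩ := ih
    refine ⟨fun z ↦ r z * (1 + z.1 * z.2.1 + z.1 ^ 2 * z.2.2) + N * z.2.1 * z.2.2 +
      (N * z.2.2 + N.choose 2 * z.2.1 ^ 2) * (z.2.1 + z.1 * z.2.2), by fun_prop, fun d f g ↦ ?_⟩
    rw [pow_succ, h, Nat.choose_succ_succ' N 1, Nat.choose_one_right]
    push_cast
    ring

/-- The second-order perturbation `1 + d f + d² g` of the constant function `1`. -/
def quadPerturb {X : Type*} (f g : X → ℝ) (d : ℝ) (x : X) : ℝ := 1 + d * f x + d ^ 2 * g x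

lemma continuous_quadPerturb {X : Type*} [TopologicalSpace X] {f g : X → ℝ} (hf : Continuous f)
    (hg : Continuous g) : Continuous fun z : ℝ × X ↦ quadPerturb f g z.1 z.2 := by
  unfold quadPerturb
  fun_prop

lemma eventually_quadPerturb_pos {X : Type*} [TopologicalSpace X] [CompactSpace X] {f g : X → ℝ}
    (hf : Continuous f) (hg : Continuous g) : ∀ᶠ d in 𝓝 0, ∀ x, 0 < quadPerturb f g d x :=
  eventually_forall_lt_of_continuous continuous_const (continuous_quadPerturb hf hg)
    (by simp [quadPerturb])

lemma integral_mul_quadPerturb_pow {X : Type*} [TopologicalSpace X] [CompactSpace X]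
    [MeasurableSpace X] [OpensMeasurableSpace X] {μ : Measure X} [IsFiniteMeasure μ]
    {w f g : X → ℝ} (hw : Continuous w) (hf : Continuous f) (hg : Continuous g)
    (hwf : ∫ x, w x * f x ∂μ = 0) (N : ℕ) :
    ∃ r : ℝ → ℝ, Continuous r ∧ ∀ d, ∫ x, w x * quadPerturb f g d x ^ N ∂μ =
      ∫ x, w x ∂μ + d ^ 2 * ∫ x, w x * (N * g x + N.choose 2 * f x ^ 2) ∂μ + d ^ 3 * r d := by
  obtain ⟨r, hr, hr_eq⟩ := exists_continuous_pow_expansion (R := ℝ) N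
  have integrable {φ : X → ℝ} (hφ : Continuous φ) : Integrable φ μ :=
    hφ.integrable_of_hasCompactSupport (.of_compactSpace φ)
  refine ⟨fun d ↦ ∫ x, w x * r (d, f x, g x) ∂μ, ?_, fun d ↦ ?_⟩
  · simpa using continuous_parametric_integral_of_continuous (μ := μ)
      (f := fun d x ↦ w x * r (d, f x, g x)) (by fun_prop) isCompact_univ
  calc ∫ x, w x * quadPerturb f g d x ^ N ∂μ
    _ = ∫ x, (w x + d * N * (w x * f x) + d ^ 2 * (w x * (N * g x + N.choose 2 * f x ^ 2)) +
          d ^ 3 * (w x * r (d, f x, g x))) ∂μ := by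
      refine integral_congr_ae (.of_forall fun x ↦ ?_)
      simp only [quadPerturb, hr_eq]
      ring
    _ = _ := by
      rw [integral_add (integrable (by fun_prop)) (integrable (by fun_prop)),
        integral_add (integrable (by fun_prop)) (integrable (by fun_prop)),
        integral_add (integrable (by fun_prop)) (integrable (by fun_prop)),
        integral_const_mul, integral_const_mul, integral_const_mul, hwf, mul_zero, add_zero]

lemma le_of_eventually_mul_le_sq {I p q : ℝ} (hI : 0 < I) {r₁ r₂ r₃ : ℝ → ℝ}
    (hr₁ : Continuous r₁) (hr₂ : Continuous r₂) (hr₃ : Continuous r₃)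
    (h : ∀ᶠ d in 𝓝[≠] 0, (I + d ^ 2 * p + d ^ 3 * r₁ d) * (I + d ^ 2 * p + d ^ 3 * r₂ d) ≤
      (I + d ^ 2 * q + d ^ 3 * r₃ d) ^ 2) : p ≤ q := by
  let F (d : ℝ) : ℝ := I * (p + d * r₁ d + (p + d * r₂ d)) +
    d ^ 2 * ((p + d * r₁ d) * (p + d * r₂ d))
  let G (d : ℝ) : ℝ := I * (2 * (q + d * r₃ d)) + d ^ 2 * (q + d * r₃ d) ^ 2
  have F_le_G : ∀ᶠ d in 𝓝[≠] 0, F d ≤ G d := by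
    filter_upwards [h, self_mem_nhdsWithin] with d hd hd₀
    refine le_of_mul_le_mul_left ?_ (pow_pos (abs_pos.2 hd₀) 2)
    rw [sq_abs]
    simp only [F, G]
    linarith
  have hF : Continuous F := by fun_prop
  have hG : Continuous G := by fun_prop
  have h₀ : F 0 ≤ G 0 := le_of_tendsto_of_tendsto (hF.continuousWithinAt (s := {0}ᶜ))
    (hG.continuousWithinAt (s := {0}ᶜ)) F_le_G
  simp only [F, G] at h₀
  exact le_of_mul_le_mul_left (by linarith) hI

/-- The `e`-coordinate, relative to the origin `c`, of the point of `∂K` with outer normal `u`. -/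
def boundaryCoord {n : ℕ} (K : Set (Eu n)) (c e : Eu n) (u : Sph n) : ℝ :=
  ⟪gradient (sfn K) u - c, e⟫_ℝ

lemma boundaryCoord_neg {n : ℕ} (K : Set (Eu n)) (c e : Eu n) (u : Sph n) :
    boundaryCoord K c (-e) u = -boundaryCoord K c e u :=
  inner_neg_right _ _

namespace IsSmoothConvexBody

variable {n : ℕ} {K : Set (Eu n)} {e : Eu n}

lemma continuous_boundaryCoord (hK : IsSmoothConvexBody K) (c e : Eu n) :
    Continuous (boundaryCoord K c e) :=
  (hK.continuous_gradient_sfn.sub continuous_const).inner continuous_const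

lemma continuous_inner_hessA (hK : IsSmoothConvexBody K) (e : Eu n) :
    Continuous fun u : Sph n ↦ ⟪hessA K u e, e⟫_ℝ :=
  (hK.continuous_hessA.clm_apply continuous_const).inner continuous_const

lemma sfn_add_smul_le_of_inner_hessA_le (hK : IsSmoothConvexBody K) {s : Set ℝ} (hs : IsOpen s)
    (hs_convex : Convex ℝ s) (h₀ : 0 ∈ s) {x : Eu n} {b : ℝ} (hx : ∀ t ∈ s, x + t • e ≠ 0)
    (hb : ∀ t ∈ s, ⟪hessA K (x + t • e) e, e⟫_ℝ ≤ b) {t : ℝ} (ht : t ∈ s) :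
    sfn K (x + t • e) ≤ sfn K x + t * ⟪gradient (sfn K) x, e⟫_ℝ + t ^ 2 / 2 * b := by
  have hasDerivAt_line (t : ℝ) : HasDerivAt (fun t : ℝ ↦ x + t • e) e t := by
    simpa using ((hasDerivAt_id t).smul_const e).const_add x
  have hasDerivAt_sfn (t : ℝ) (ht : t ∈ s) : HasDerivAt (fun t : ℝ ↦ sfn K (x + t • e))
      ⟪gradient (sfn K) (x + t • e), e⟫_ℝ t := by
    have h := (hK.differentiableAt_sfn (hx t ht)).hasGradientAt.hasFDerivAt.comp_hasDerivAt t
      (hasDerivAt_line t)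
    exact h
  have hasDerivAt_gradient (t : ℝ) (ht : t ∈ s) :
      HasDerivAt (fun t : ℝ ↦ ⟪gradient (sfn K) (x + t • e), e⟫_ℝ)
        ⟪hessA K (x + t • e) e, e⟫_ℝ t := by
    simpa using ((hK.hasFDerivAt_gradient_sfn (hx t ht)).comp_hasDerivAt t
      (hasDerivAt_line t)).inner ℝ (hasDerivAt_const t e)
  simpa using le_quadratic_of_deriv2_le hs hs_convex h₀ hasDerivAt_sfn hasDerivAt_gradient hb ht

lemma exists_forall_sfn_add_smul_le (hK : IsSmoothConvexBody K) {b : Sph n → ℝ} (hb : Continuous b)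
    (hb_lt : ∀ x : Sph n, ⟪hessA K x e, e⟫_ℝ < b x) :
    ∃ T > 0, ∀ (x : Sph n) (t : ℝ), |t| < T →
      sfn K (x + t • e) ≤ sfn K x + t * ⟪gradient (sfn K) x, e⟫_ℝ + t ^ 2 / 2 * b x := by
  have near_sphere : ∀ᶠ t : ℝ in 𝓝 0, ∀ x : Sph n,
      (x : Eu n) + t • e ≠ 0 ∧ ⟪hessA K (x + t • e) e, e⟫_ℝ < b x := by
    have h := isCompact_univ.eventually_forall_of_forall_eventually (x₀ := (0 : ℝ))
      (P := fun t (x : Sph n) ↦ (x : Eu n) + t • e ≠ 0 ∧ ⟪hessA K (x + t • e) e, e⟫_ℝ < b x)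
    refine (h fun x _ ↦ ?_).mono fun t ht x ↦ ht x (Set.mem_univ x)
    have tendsto_line : ContinuousAt (fun z : ℝ × Sph n ↦ (z.2 : Eu n) + z.1 • e) (0, x) := by
      fun_prop
    have ne_zero : (x : Eu n) + (0 : ℝ) • e ≠ 0 := by simpa using ne_zero_of_mem_unit_sphere x
    have continuousAt_hessA : ContinuousAt (hessA K) ((x : Eu n) + (0 : ℝ) • e) :=
      hK.continuousOn_hessA.continuousAt (isOpen_compl_singleton.mem_nhds ne_zero)
    refine (tendsto_line.eventually_ne ne_zero).and (ContinuousAt.eventually_lt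
      (((ContinuousAt.comp (f := fun z : ℝ × Sph n ↦ (z.2 : Eu n) + z.1 • e) continuousAt_hessA
        tendsto_line).clm_apply continuousAt_const).inner continuousAt_const)
      (by fun_prop) ?_)
    simpa using hb_lt x
  obtain ⟨T, T_pos, hT⟩ := Metric.eventually_nhds_iff_ball.1 near_sphere
  refine ⟨T, T_pos, fun x t ht ↦ hK.sfn_add_smul_le_of_inner_hessA_le isOpen_ball
    (convex_ball _ _) (mem_ball_self T_pos) (fun s hs ↦ (hT s hs x).1)
    (fun s hs ↦ (hT s hs x).2.le) (by simpa using ht)⟩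

lemma inner_gradient_le_of_sfn_add_smul_le (hK : IsSmoothConvexBody K) (c : Eu n) {x : Eu n}
    (u : Sph n) {s b : ℝ}
    (hb : sfn K (x + s • e) ≤ sfn K x + s * ⟪gradient (sfn K) x, e⟫_ℝ + s ^ 2 / 2 * b) :
    ⟪x, gradient (sfn K) u⟫_ℝ ≤ sfn K x + s * ⟪gradient (sfn K) x - c, e⟫_ℝ + s ^ 2 / 2 * b -
      s * boundaryCoord K c e u := by
  have support := hK.inner_gradient_sfn_le (ne_zero_of_mem_unit_sphere u) (x + s • e)
  rw [inner_add_left, real_inner_smul_left, real_inner_comm _ e] at support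
  simp only [boundaryCoord, inner_sub_left]
  linear_combination support + hb

lemma eventually_inner_gradient_le (hK : IsSmoothConvexBody K) (c : Eu n) {b k : Sph n → ℝ}
    (hb : Continuous b) (hk : Continuous k) (hb_lt : ∀ x : Sph n, ⟪hessA K x e, e⟫_ℝ < b x)
    (hk_lt : ∀ x : Sph n, boundaryCoord K c e x ^ 2 + sfn K x * b x / 2 < k x) :
    ∀ᶠ d in 𝓝 0, ∀ x u : Sph n, ⟪(x : Eu n), gradient (sfn K) u⟫_ℝ ≤
      sfn K x * quadPerturb (boundaryCoord K c e) k d x * (1 - d * boundaryCoord K c e u) := by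
  let f := boundaryCoord K c e
  let h (x : Sph n) := sfn K x
  let σ (z : ℝ × Sph n) := quadPerturb f k z.1 z.2
  have hf : Continuous f := hK.continuous_boundaryCoord c e
  have hh : Continuous h := hK.continuous_sfn
  have hσ : Continuous σ := continuous_quadPerturb hf hk
  obtain ⟨T, T_pos, taylor⟩ := hK.exists_forall_sfn_add_smul_le hb hb_lt
  have step_small : ∀ᶠ d in 𝓝 0, ∀ x, |h x * σ (d, x) * d| < T :=
    eventually_forall_lt_of_continuous (F := fun z : ℝ × Sph n ↦ |h z.2 * σ z * z.1|)
      (G := fun _ ↦ T) (by fun_prop) (by fun_prop) fun x ↦ by simpa using T_pos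
  have second_order : ∀ᶠ d in 𝓝 0, ∀ x,
      f x * (f x + d * k x) + h x * b x / 2 * σ (d, x) ^ 2 < k x :=
    eventually_forall_lt_of_continuous
      (F := fun z : ℝ × Sph n ↦ f z.2 * (f z.2 + z.1 * k z.2) + h z.2 * b z.2 / 2 * σ z ^ 2)
      (G := fun z ↦ k z.2) (by fun_prop) (by fun_prop) fun x ↦ by
        simp only [σ, quadPerturb]
        linear_combination hk_lt x
  filter_upwards [step_small, second_order] with d step_small second_order x u
  -- The step `s` is chosen so that the bound `h x * σ (d, x) - s * f u` factors.
  set s := h x * σ (d, x) * d with s_def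
  have σ_eq : σ (d, x) = 1 + d * f x + d ^ 2 * k x := rfl
  have le_hσ : h x + s * f x + s ^ 2 / 2 * b x ≤ h x * σ (d, x) := by
    have := mul_le_mul_of_nonneg_left (second_order x).le
      (mul_nonneg (hK.pos x).le (sq_nonneg d))
    rw [s_def]
    linear_combination this + (h x * d * f x - h x) * σ_eq
  calc ⟪(x : Eu n), gradient (sfn K) u⟫_ℝ
    _ ≤ h x + s * f x + s ^ 2 / 2 * b x - s * f u :=
      hK.inner_gradient_le_of_sfn_add_smul_le c u (taylor x s (step_small x))
    _ ≤ h x * σ (d, x) - s * f u := by gcongr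
    _ = h x * σ (d, x) * (1 - d * f u) := by rw [s_def]; ring

lemma eventually_inner_invGauss_lt (hK : IsSmoothConvexBody K) (c : Eu n) {b g k : Sph n → ℝ}
    (hb : Continuous b) (hg : Continuous g) (hk : Continuous k)
    (hb_lt : ∀ x : Sph n, ⟪hessA K x e, e⟫_ℝ < b x)
    (hg_lt : ∀ x, g x < boundaryCoord K c e x ^ 2)
    (hk_lt : ∀ x : Sph n, boundaryCoord K c e x ^ 2 + sfn K x * b x / 2 < k x) :
    ∀ᶠ d in 𝓝 0, ∀ z ∈ invGauss K '' puncturedStar (quadPerturb (boundaryCoord K c e) g d),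
      ∀ x : Sph n, ⟪(x : Eu n), z⟫_ℝ < sfn K x * quadPerturb (boundaryCoord K c e) k d x := by
  have hf : Continuous (boundaryCoord K c e) := hK.continuous_boundaryCoord c e
  set f := boundaryCoord K c e
  have one_sub_pos : ∀ᶠ d in 𝓝 0, ∀ u, 0 < 1 - d * f u :=
    eventually_forall_lt_of_continuous (F := fun _ ↦ 0)
      (G := fun z : ℝ × Sph n ↦ 1 - z.1 * f z.2) (by fun_prop) (by fun_prop) (by simp)
  have radius_mul_le_one : ∀ᶠ d in 𝓝 0, ∀ u, g u * (1 - d * f u) < f u ^ 2 :=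
    eventually_forall_lt_of_continuous (F := fun z : ℝ × Sph n ↦ g z.2 * (1 - z.1 * f z.2))
      (G := fun z ↦ f z.2 ^ 2) (by fun_prop) (by fun_prop) (by simpa using hg_lt)
  filter_upwards [one_sub_pos, radius_mul_le_one, eventually_quadPerturb_pos hf hk,
    hK.eventually_inner_gradient_le c hb hk hb_lt hk_lt]
    with d one_sub_pos radius_mul_le_one σ_pos inner_le z hz x
  obtain ⟨_, ⟨u, r, hr, hru, rfl⟩, rfl⟩ := hz
  have r_mul_lt_one : r * (1 - d * f u) < 1 := by
    refine (mul_lt_mul_of_pos_right hru (one_sub_pos u)).trans_le ?_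
    have := mul_le_mul_of_nonneg_left (radius_mul_le_one u).le (sq_nonneg d)
    rw [quadPerturb]
    linear_combination this
  have hσ_pos : 0 < sfn K x * quadPerturb f k d x := mul_pos (hK.pos x) (σ_pos x)
  rw [invGauss_smul_sphere K hr, real_inner_smul_right]
  calc r * ⟪(x : Eu n), gradient (sfn K) u⟫_ℝ
    _ ≤ r * (sfn K x * quadPerturb f k d x * (1 - d * f u)) := by gcongr; exact inner_le x u
    _ = sfn K x * quadPerturb f k d x * (r * (1 - d * f u)) := by ring
    _ < sfn K x * quadPerturb f k d x := mul_lt_of_lt_one_right hσ_pos r_mul_lt_one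

lemma integral_dens_mul_integral_dens_le (hK : IsSmoothConvexBody K) {φ₁ φ₂ ψ : Sph n → ℝ}
    (hφ₁ : Continuous φ₁) (hφ₂ : Continuous φ₂) (hψ : Continuous ψ)
    (hφ₁_pos : ∀ u, 0 < φ₁ u) (hφ₂_pos : ∀ u, 0 < φ₂ u) (hψ_pos : ∀ u, 0 < ψ u)
    (hψ_midpoint : ∀ y ∈ invGauss K '' puncturedStar φ₁, ∀ z ∈ invGauss K '' puncturedStar φ₂,
      ∀ u : Sph n, ⟪(u : Eu n), midpoint ℝ y z⟫_ℝ < sfn K u * ψ u) :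
    (∫ u : Sph n, dens K u * φ₁ u ^ (n + 1) ∂sphMeas n) *
        ∫ u : Sph n, dens K u * φ₂ u ^ (n + 1) ∂sphMeas n ≤
      (∫ u : Sph n, dens K u * ψ u ^ (n + 1) ∂sphMeas n) ^ 2 := by
  have measurable {φ : Sph n → ℝ} (hφ : Continuous φ) :
      MeasurableSet (invGauss K '' puncturedStar φ) :=
    measurableSet_image_puncturedStar (fun _ ↦ hK.differentiableAt_invGauss) hK.injOn_invGauss hφ
  have integral_nonneg {φ : Sph n → ℝ} (hφ : ∀ u, 0 < φ u) :
      0 ≤ (∫ u : Sph n, dens K u * φ u ^ (n + 1) ∂sphMeas n) / (n + 1) :=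
    div_nonneg (integral_nonneg fun u ↦
      mul_nonneg (hK.dens_pos u).le (pow_nonneg (hφ u).le _)) (by positivity)
  have brunnMinkowski := (prekopaLeindler_volume (Eu n)).measure_mul_measure_le (measurable hφ₁)
    (measurable hφ₂) ((measurable hψ).insert 0) fun y hy z hz ↦
      or_iff_not_imp_left.2 fun h₀ ↦
        hK.mem_image_invGauss_puncturedStar h₀ (hψ_midpoint y hy z hz)
  rw [measure_congr (insert_ae_eq_self 0 _), hK.volume_image_invGauss_puncturedStar hφ₁ hφ₁_pos,
    hK.volume_image_invGauss_puncturedStar hφ₂ hφ₂_pos,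
    hK.volume_image_invGauss_puncturedStar hψ hψ_pos,
    ← ENNReal.ofReal_mul (integral_nonneg hφ₁_pos), ← ENNReal.ofReal_pow (integral_nonneg hψ_pos),
    ENNReal.ofReal_le_ofReal_iff (sq_nonneg _), div_mul_div_comm, div_pow, ← sq,
    div_le_div_iff_of_pos_right (by positivity)] at brunnMinkowski
  exact brunnMinkowski

end IsSmoothConvexBody

instance neZero_sphMeas (n : ℕ) : NeZero (sphMeas n) :=
  ⟨Measure.toSphere_ne_zero _⟩

namespace IsSmoothConvexBody

variable {n : ℕ} {K : Set (Eu n)}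

lemma integral_dens_pos (hK : IsSmoothConvexBody K) : 0 < ∫ u : Sph n, dens K u ∂sphMeas n := by
  have support_eq : (Function.support fun u : Sph n ↦ dens K u) = Set.univ :=
    Set.eq_univ_of_forall fun u ↦ (hK.dens_pos u).ne'
  rw [integral_pos_iff_support_of_nonneg (fun u ↦ (hK.dens_pos u).le)
    (integrable_sphMeas hK.continuous_dens), support_eq]
  exact Measure.measure_univ_pos.2 (NeZero.ne _)

lemma integral_dens_smul_gradient_sub_cK (hK : IsSmoothConvexBody K) :
    ∫ u : Sph n, dens K u • (gradient (sfn K) u - cK K) ∂sphMeas n = 0 := by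
  have hw := hK.continuous_dens
  have hy := hK.continuous_gradient_sfn
  simp only [smul_sub]
  rw [integral_sub (integrable_sphMeas (by fun_prop)) (integrable_sphMeas (by fun_prop)),
    integral_smul_const, cK, smul_inv_smul₀ hK.integral_dens_pos.ne', sub_self]

lemma integral_dens_mul_boundaryCoord_cK (hK : IsSmoothConvexBody K) (e : Eu n) :
    ∫ u : Sph n, dens K u * boundaryCoord K (cK K) e u ∂sphMeas n = 0 := by
  have h := integral_inner (𝕜 := ℝ) (integrable_sphMeas (hK.continuous_dens.smul
    (hK.continuous_gradient_sfn.sub continuous_const))) e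
    (f := fun u : Sph n ↦ dens K u • (gradient (sfn K) u - cK K))
  rw [hK.integral_dens_smul_gradient_sub_cK, inner_zero_right] at h
  simpa only [boundaryCoord, real_inner_smul_right, real_inner_comm e] using h

lemma eventually_integral_quadPerturb_mul_le (hK : IsSmoothConvexBody K) (c e : Eu n)
    {b g k : Sph n → ℝ} (hb : Continuous b) (hg : Continuous g) (hk : Continuous k)
    (hb_lt : ∀ x : Sph n, ⟪hessA K x e, e⟫_ℝ < b x)
    (hg_lt : ∀ x, g x < boundaryCoord K c e x ^ 2)
    (hk_lt : ∀ x : Sph n, boundaryCoord K c e x ^ 2 + sfn K x * b x / 2 < k x) :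
    ∀ᶠ d in 𝓝 0,
      (∫ u : Sph n, dens K u * quadPerturb (boundaryCoord K c e) g d u ^ (n + 1) ∂sphMeas n) *
        ∫ u : Sph n, dens K u * quadPerturb (-boundaryCoord K c e) g d u ^ (n + 1) ∂sphMeas n ≤
      (∫ u : Sph n, dens K u * quadPerturb 0 k d u ^ (n + 1) ∂sphMeas n) ^ 2 := by
  have hf := hK.continuous_boundaryCoord c e
  have neg_eq : boundaryCoord K c (-e) = -boundaryCoord K c e := funext (boundaryCoord_neg K c e)
  have inner_lt_neg := hK.eventually_inner_invGauss_lt (e := -e) c hb hg hk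
    (by simpa using hb_lt) (by simpa [neg_eq] using hg_lt) (by simpa [neg_eq] using hk_lt)
  rw [neg_eq] at inner_lt_neg
  filter_upwards [eventually_quadPerturb_pos hf hg, eventually_quadPerturb_pos hf.neg hg,
    eventually_quadPerturb_pos continuous_zero hk, inner_lt_neg,
    hK.eventually_inner_invGauss_lt c hb hg hk hb_lt hg_lt hk_lt]
    with d pos pos_neg pos_midpoint inner_lt_neg inner_lt
  have continuous {f g : Sph n → ℝ} (hf : Continuous f) (hg : Continuous g) :
      Continuous (quadPerturb f g d) :=
    (continuous_quadPerturb hf hg).comp (.prodMk_right d)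
  refine hK.integral_dens_mul_integral_dens_le (continuous hf hg) (continuous hf.neg hg)
    (continuous continuous_zero hk) pos pos_neg pos_midpoint fun y hy z hz u ↦ ?_
  have inner_y := inner_lt y hy u
  have inner_z := inner_lt_neg z hz u
  rw [midpoint_eq_smul_add, real_inner_smul_right, inner_add_right]
  simp only [quadPerturb, Pi.neg_apply, Pi.zero_apply, invOf_eq_inv] at *
  linear_combination (inner_y + inner_z) / 2

lemma integral_second_variation_le (hK : IsSmoothConvexBody K) (e : Eu n)
    {b g k : Sph n → ℝ} (hb : Continuous b) (hg : Continuous g) (hk : Continuous k)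
    (hb_lt : ∀ x : Sph n, ⟪hessA K x e, e⟫_ℝ < b x)
    (hg_lt : ∀ x, g x < boundaryCoord K (cK K) e x ^ 2)
    (hk_lt : ∀ x : Sph n, boundaryCoord K (cK K) e x ^ 2 + sfn K x * b x / 2 < k x) :
    ∫ u : Sph n, dens K u * (g u + n / 2 * boundaryCoord K (cK K) e u ^ 2) ∂sphMeas n ≤
      ∫ u : Sph n, dens K u * k u ∂sphMeas n := by
  have hf := hK.continuous_boundaryCoord (cK K) e
  have mean_zero := hK.integral_dens_mul_boundaryCoord_cK e
  set f := boundaryCoord K (cK K) e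
  have hw := hK.continuous_dens
  obtain ⟨r₁, hr₁, eq₁⟩ := integral_mul_quadPerturb_pow hw hf hg mean_zero (n + 1)
  obtain ⟨r₂, hr₂, eq₂⟩ := integral_mul_quadPerturb_pow hw hf.neg hg
    (by simpa [integral_neg] using mean_zero) (n + 1)
  obtain ⟨r₃, hr₃, eq₃⟩ := integral_mul_quadPerturb_pow hw continuous_zero hk
    (μ := sphMeas n) (by simp) (n + 1)
  have h := hK.eventually_integral_quadPerturb_mul_le (cK K) e hb hg hk hb_lt hg_lt hk_lt
  simp only [eq₁, eq₂, eq₃, f, Pi.neg_apply, neg_sq] at h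
  have coeff_le := le_of_eventually_mul_le_sq hK.integral_dens_pos hr₁ hr₂ hr₃
    (h.filter_mono nhdsWithin_le_nhds)
  have choose_eq : ((n + 1).choose 2 : ℝ) = (n + 1) * (n / 2) := by
    rw [Nat.cast_choose_two]
    push_cast
    ring
  simp only [choose_eq, Nat.cast_add_one, Pi.zero_apply, ne_eq, OfNat.ofNat_ne_zero,
    not_false_eq_true, zero_pow, mul_zero, add_zero, mul_assoc, ← mul_add,
    mul_left_comm _ ((n : ℝ) + 1), integral_const_mul] at coeff_le
  exact le_of_mul_le_mul_left coeff_le (by positivity)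

lemma local_brunnMinkowski (hK : IsSmoothConvexBody K) (e : Eu n) :
    n * ∫ u : Sph n, dens K u * boundaryCoord K (cK K) e u ^ 2 ∂sphMeas n ≤
      ∫ u : Sph n, dens K u * (sfn K u * ⟪hessA K u e, e⟫_ℝ) ∂sphMeas n := by
  have hf := hK.continuous_boundaryCoord (cK K) e
  have ha := hK.continuous_inner_hessA e
  have hh := hK.continuous_sfn
  have hw := hK.continuous_dens
  set f := boundaryCoord K (cK K) e
  have second_variation (η : ℝ) (hη : η ∈ Set.Ioi 0) :
      ∫ u : Sph n, dens K u * (n * f u ^ 2 - sfn K u * ⟪hessA K u e, e⟫_ℝ) ∂sphMeas n ≤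
        η * ∫ u : Sph n, dens K u * (sfn K u + 4) ∂sphMeas n := by
    have h : ∫ u : Sph n, dens K u * (f u ^ 2 - η + n / 2 * f u ^ 2) ∂sphMeas n ≤
        ∫ u : Sph n, dens K u * (f u ^ 2 + sfn K u * (⟪hessA K u e, e⟫_ℝ + η) / 2 + η) ∂sphMeas n :=
      hK.integral_second_variation_le e (ha.add continuous_const) (by fun_prop) (by fun_prop)
        (fun _ ↦ lt_add_of_pos_right _ hη) (fun _ ↦ sub_lt_self _ hη)
        fun _ ↦ lt_add_of_pos_right _ hη
    rw [← sub_nonneg, ← integral_sub (integrable_sphMeas (by fun_prop))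
      (integrable_sphMeas (by fun_prop))] at h
    rw [← integral_const_mul, ← sub_nonneg, ← integral_sub (integrable_sphMeas (by fun_prop))
      (integrable_sphMeas (by fun_prop))]
    refine (mul_nonneg zero_le_two h).trans_eq ?_
    rw [← integral_const_mul]
    refine integral_congr_ae (.of_forall fun u ↦ ?_)
    ring
  have le_zero : ∫ u : Sph n, dens K u * (n * f u ^ 2 - sfn K u * ⟪hessA K u e, e⟫_ℝ) ∂sphMeas n ≤
      0 := by
    refine ge_of_tendsto (x := 𝓝[>] (0 : ℝ)) ?_
      (eventually_mem_nhdsWithin.mono second_variation)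
    exact ((continuous_mul_const _).tendsto' 0 0 (zero_mul _)).mono_left nhdsWithin_le_nhds
  simp only [mul_sub] at le_zero
  rw [integral_sub (integrable_sphMeas (by fun_prop)) (integrable_sphMeas (by fun_prop)),
    sub_nonpos] at le_zero
  simpa only [mul_left_comm _ (n : ℝ), integral_const_mul] using le_zero

end IsSmoothConvexBody

/-! ### Trace of the local inequality -/

section TranslatedField

variable {E : Type*} [NormedAddCommGroup E] [InnerProductSpace ℝ E] [FiniteDimensional ℝ E]
  {f : E → ℝ} (c : E)

/-- A vector field whose divergence gives the integral identity for the translate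
`g x = f x - ⟪x, c⟫` of a 1-homogeneous function `f`. It is `g ∇g` plus the field
`⟪x, c⟫ ∇f - f c`, which is tangent to the spheres around `0` and whose divergence
`⟪x, c⟫ Δf` turns the term `g Δf` of `div (g ∇g)` into `f Δf`. -/
def translatedField (f : E → ℝ) (c x : E) : E :=
  f x • (gradient f x - (2 : ℝ) • c) + ⟪c, x⟫_ℝ • c

lemma contDiffOn_translatedField {s : Set E} (hs : IsOpen s) (hf : ContDiffOn ℝ 2 f s) :
    ContDiffOn ℝ 1 (translatedField f c) s :=
  ((hf.of_le one_le_two).smul ((contDiffOn_gradient hs hf one_add_one_eq_two.le).sub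
    contDiffOn_const)).add ((innerSL ℝ c).contDiff.contDiffOn.smul contDiffOn_const)

lemma PosHomogeneous.translatedField (hf : PosHomogeneous 1 f) :
    PosHomogeneous 1 (translatedField f c) := fun t ht x ↦ by
  simp only [_root_.translatedField, hf ht, PosHomogeneous.gradient (k := 0) hf ht,
    real_inner_smul_right, pow_one, pow_zero, one_smul, smul_eq_mul]
  module

lemma inner_translatedField_self (hf : PosHomogeneous 1 f) {x : E}
    (hfx : DifferentiableAt ℝ f x) :
    ⟪x, translatedField f c x⟫_ℝ = (f x - ⟪x, c⟫_ℝ) ^ 2 := by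
  rw [translatedField, inner_add_right, real_inner_smul_right, inner_sub_right,
    hf.inner_gradient_self hfx, real_inner_smul_right, real_inner_smul_right, real_inner_comm x c]
  ring

lemma divergence_translatedField {x : E} (hf : DifferentiableAt ℝ f x)
    (hf' : DifferentiableAt ℝ (gradient f) x) :
    divergence (translatedField f c) x =
      ‖gradient f x - c‖ ^ 2 + f x * divergence (gradient f) x := by
  have inner_fderiv : HasFDerivAt (fun y ↦ ⟪c, y⟫_ℝ) (innerSL ℝ c) x := (innerSL ℝ c).hasFDerivAt
  have hg := hf'.sub_const ((2 : ℝ) • c)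
  have hc := differentiableAt_const (𝕜 := ℝ) (x := x) c
  unfold translatedField
  rw [divergence_add (hf.fun_smul hg) (inner_fderiv.differentiableAt.fun_smul hc),
    divergence_smul hf hg, divergence_smul inner_fderiv.differentiableAt hc,
    divergence_sub_const, divergence_const, inner_fderiv.fderiv, innerSL_apply_apply,
    ← inner_gradient_left, norm_sub_sq_real, inner_sub_right, real_inner_smul_right,
    real_inner_self_eq_norm_sq, real_inner_self_eq_norm_sq]
  ring

lemma integral_norm_gradient_sub_sq_add [MeasurableSpace E] [BorelSpace E] [Nontrivial E]
    (μ : Measure E) [μ.IsAddHaarMeasure] (hf : ContDiffOn ℝ 2 f {0}ᶜ)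
    (hf_homog : PosHomogeneous 1 f) :
    ∫ u : sphere (0 : E) 1,
        (‖gradient f u - c‖ ^ 2 + f u * divergence (gradient f) (u : E)) ∂μ.toSphere =
      Module.finrank ℝ E * ∫ u : sphere (0 : E) 1, (f u - ⟪(u : E), c⟫_ℝ) ^ 2 ∂μ.toSphere := by
  have hg : ContDiffOn ℝ 1 (gradient f) {0}ᶜ :=
    contDiffOn_gradient isOpen_compl_singleton hf one_add_one_eq_two.le
  have mem_nhds (u : sphere (0 : E) 1) : {0}ᶜ ∈ 𝓝 (u : E) :=
    isOpen_compl_singleton.mem_nhds (ne_zero_of_mem_unit_sphere u)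
  have hf_diff (u : sphere (0 : E) 1) : DifferentiableAt ℝ f u :=
    (hf.differentiableOn two_ne_zero).differentiableAt (mem_nhds u)
  have hg_diff (u : sphere (0 : E) 1) : DifferentiableAt ℝ (gradient f) u :=
    (hg.differentiableOn one_ne_zero).differentiableAt (mem_nhds u)
  simpa only [divergence_translatedField c (hf_diff _) (hg_diff _),
    inner_translatedField_self c hf_homog (hf_diff _)] using
    integral_sphere_divergence μ (contDiffOn_translatedField c isOpen_compl_singleton hf)
      (hf_homog.translatedField c)

end TranslatedField

namespace IsSmoothConvexBody

variable {n : ℕ} {K : Set (Eu n)}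

lemma divergence_gradient_sfn_eq_sum (K : Set (Eu n)) {ι : Type*} [Fintype ι]
    (b : OrthonormalBasis ι ℝ (Eu n)) (x : Eu n) :
    divergence (gradient (sfn K)) x = ∑ i, ⟪hessA K x (b i), b i⟫_ℝ := by
  simp only [divergence, LinearMap.trace_eq_sum_inner _ b, ContinuousLinearMap.coe_coe, hessA,
    real_inner_comm]

lemma divergence_gradient_sfn_nonneg (hK : IsSmoothConvexBody K) (u : Sph n) :
    0 ≤ divergence (gradient (sfn K)) (u : Eu n) := by
  rw [divergence_gradient_sfn_eq_sum K (EuclideanSpace.basisFun (Fin (n + 1)) ℝ)]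
  exact Finset.sum_nonneg fun i _ ↦ hK.inner_hessA_nonneg u _

lemma continuous_divergence_gradient_sfn (hK : IsSmoothConvexBody K) :
    Continuous fun u : Sph n ↦ divergence (gradient (sfn K)) (u : Eu n) :=
  continuous_comp_coe_sphere <|
    continuousOn_divergence isOpen_compl_singleton (hK.contDiffOn_gradient_sfn.of_le (by simp))

lemma mul_integral_dens_mul_norm_sq_le (hK : IsSmoothConvexBody K) :
    n * ∫ u : Sph n, dens K u * ‖gradient (sfn K) u - cK K‖ ^ 2 ∂sphMeas n ≤
      ∫ u : Sph n, dens K u * (sfn K u * divergence (gradient (sfn K)) (u : Eu n)) ∂sphMeas n := by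
  let b := EuclideanSpace.basisFun (Fin (n + 1)) ℝ
  have hw := hK.continuous_dens
  have hh := hK.continuous_sfn
  have hf (i) := hK.continuous_boundaryCoord (cK K) (b i)
  have ha (i) := hK.continuous_inner_hessA (b i)
  have norm_sq (u : Sph n) :
      ‖gradient (sfn K) u - cK K‖ ^ 2 = ∑ i, boundaryCoord K (cK K) (b i) u ^ 2 :=
    (b.sum_sq_inner_left _).symm
  simp only [norm_sq, divergence_gradient_sfn_eq_sum K b, Finset.mul_sum]
  rw [integral_finsetSum _ fun i _ ↦ integrable_sphMeas (by fun_prop),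
    integral_finsetSum _ fun i _ ↦ integrable_sphMeas (by fun_prop), Finset.mul_sum]
  exact Finset.sum_le_sum fun i _ ↦ hK.local_brunnMinkowski (b i)

lemma integral_norm_gradient_sfn_sub_sq_add (hK : IsSmoothConvexBody K) (c : Eu n) :
    ∫ u : Sph n, ‖gradient (sfn K) u - c‖ ^ 2 ∂sphMeas n +
        ∫ u : Sph n, sfn K u * divergence (gradient (sfn K)) (u : Eu n) ∂sphMeas n =
      (n + 1) * ∫ u : Sph n, (sfn K u - ⟪(u : Eu n), c⟫_ℝ) ^ 2 ∂sphMeas n := by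
  have hh := hK.continuous_sfn
  have hy := hK.continuous_gradient_sfn
  have hd := hK.continuous_divergence_gradient_sfn
  rw [← integral_add (integrable_sphMeas (by fun_prop)) (integrable_sphMeas (by fun_prop))]
  simpa only [sphMeas, finrank_euclideanSpace_fin, Nat.cast_add_one] using
    integral_norm_gradient_sub_sq_add c volume (hK.smooth.of_le (WithTop.coe_le_coe.2 le_top))
      (posHomogeneous_sfn K)

lemma mul_integral_norm_sq_le (hK : IsSmoothConvexBody K) {m M : ℝ}
    (hm : ∀ u : Sph n, m ≤ dens K u) (hM : ∀ u : Sph n, dens K u ≤ M) :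
    n * (m * ∫ u : Sph n, ‖gradient (sfn K) u - cK K‖ ^ 2 ∂sphMeas n) ≤
      M * ∫ u : Sph n, sfn K u * divergence (gradient (sfn K)) (u : Eu n) ∂sphMeas n := by
  have hw := hK.continuous_dens
  have hh := hK.continuous_sfn
  have hy := hK.continuous_gradient_sfn
  have hd := hK.continuous_divergence_gradient_sfn
  calc n * (m * ∫ u : Sph n, ‖gradient (sfn K) u - cK K‖ ^ 2 ∂sphMeas n)
    _ ≤ n * ∫ u : Sph n, dens K u * ‖gradient (sfn K) u - cK K‖ ^ 2 ∂sphMeas n := by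
      rw [← integral_const_mul]
      gcongr ?_ * ?_
      exact integral_mono (integrable_sphMeas (by fun_prop)) (integrable_sphMeas (by fun_prop))
        fun u ↦ mul_le_mul_of_nonneg_right (hm u) (sq_nonneg _)
    _ ≤ ∫ u : Sph n, dens K u * (sfn K u * divergence (gradient (sfn K)) (u : Eu n)) ∂sphMeas n :=
      hK.mul_integral_dens_mul_norm_sq_le
    _ ≤ M * ∫ u : Sph n, sfn K u * divergence (gradient (sfn K)) (u : Eu n) ∂sphMeas n := by
      rw [← integral_const_mul]
      exact integral_mono (integrable_sphMeas (by fun_prop)) (integrable_sphMeas (by fun_prop))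
        fun u ↦ mul_le_mul_of_nonneg_right (hM u)
          (mul_nonneg (hK.pos u).le (hK.divergence_gradient_sfn_nonneg u))

lemma continuous_tsfn (hK : IsSmoothConvexBody K) : Continuous fun u : Sph n ↦ tsfn K u :=
  hK.continuous_sfn.sub (continuous_subtype_val.inner continuous_const)

end IsSmoothConvexBody

/-- With `ε := (max h/𝒦)/(min h/𝒦) − 1`, one has
`(n+1+ε) ∫ |∇̄h̃|² dθ ≤ n ε ∫ h̃² dθ`, where
`|∇̄h̃(x)|² = |∇h_K(x) − c(K)|² − h̃(x)²` at `x ∈ S^n`. -/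
theorem stability_estimate (n : ℕ) (hn : 1 ≤ n)
    (K : Set (Eu n)) (hK : IsSmoothConvexBody K) (M m ε : ℝ)
    (hM : IsGreatest (Set.range fun x : Sph n => dens K (x : Eu n)) M)
    (hm : IsLeast (Set.range fun x : Sph n => dens K (x : Eu n)) m)
    (hε : ε = M / m - 1) :
    ((n : ℝ) + 1 + ε) *
        ∫ x : Sph n, (‖gradient (sfn K) (x : Eu n) - cK K‖ ^ 2 - tsfn K (x : Eu n) ^ 2) ∂sphMeas n ≤
      (n : ℝ) * ε * ∫ x : Sph n, tsfn K (x : Eu n) ^ 2 ∂sphMeas n := by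
  have hy := hK.continuous_gradient_sfn
  have ht := hK.continuous_tsfn
  rw [integral_sub (integrable_sphMeas (by fun_prop)) (integrable_sphMeas (by fun_prop))]
  have m_pos : 0 < m := by
    obtain ⟨u, rfl⟩ := hm.1
    exact hK.dens_pos u
  have M_eq : M = m * (1 + ε) := by rw [hε, add_sub_cancel, mul_div_cancel₀ _ m_pos.ne']
  have brunnMinkowski := hK.mul_integral_norm_sq_le (fun u ↦ hm.2 ⟨u, rfl⟩) fun u ↦ hM.2 ⟨u, rfl⟩
  rw [eq_sub_of_add_eq' (hK.integral_norm_gradient_sfn_sub_sq_add (cK K)), M_eq] at brunnMinkowski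
  refine le_of_mul_le_mul_left ?_ m_pos
  simp only [tsfn] at *
  linear_combination brunnMinkowski
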